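/- arXiv:1312.2239 — 11 statements merged into one kernel-verified Lean document; each statement's English description precedes it below -/
import Mathlib

section
/- (Joint Distribution Criterion, finite inputs.) For k = 1,…,n let Λ_k = {1,…,m_k} with m_k ≥ 1, let (S_k, 𝔖_k) be a measurable space, let Φ ⊆ Λ₁ × ⋯ × Λₙ be a nonempty set of allowable treatments, and for each φ ∈ Φ let μ_φ be a probability measure on the product measurable space S₁ × ⋯ × Sₙ. Then the family (μ_φ)_{φ∈Φ} satisfies selective influences if and only if there exists a reduced coupling vector for (μ_φ)_{φ∈Φ}, i.e., a probability measure ν on the product measurable space ∏_{k=1}^n ∏_{λ∈Λ_k} S_k (one coordinate per each value of each input) such that for every φ = (λ₁,…,λₙ) ∈ Φ the pushforward of ν under the map h ↦ (h(1)(λ₁),…,h(n)(λₙ)) equals μ_φ. -/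
open MeasureTheory

universe u

/-! The Cartesian product of all the output spaces, one factor per value of each input, is itself a
sample space on which the coordinate projections realize the outputs, so a coupling of all
coordinates already is a selective representation. Conversely, any sample space maps to this
product by recording every output at every input value, and the law of that record is the
coupling. -/

universe uι uΛ uS w

section

variable {ι : Type uι} {Λ : ι → Type uΛ} {S : ι → Type uS}

/-- The coordinates at the treatment `φ` of a full record `h` of outputs, which has one entry
`h k l` for each value `l` of each input `k`. -/
def outputsAt (φ : ∀ k, Λ k) (h : ∀ k, Λ k → S k) : ∀ k, S k :=
  fun k => h k (φ k)

variable [∀ k, MeasurableSpace (S k)]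

/-- Selective influences for the output distributions `μ φ`, `φ ∈ Φ`: all of them are realized on
one probability space, the `k`-th output depending on the treatment through its `k`-th input only.
The values of `μ` outside `Φ` are irrelevant; the sample space ranges over `Type w`. -/
def SelectiveInfluences (Φ : Set (∀ k, Λ k)) (μ : (∀ k, Λ k) → Measure (∀ k, S k)) : Prop :=
  ∃ (Ω : Type w) (_ : MeasurableSpace Ω) (P : Measure Ω),
    IsProbabilityMeasure P ∧
    ∃ f : ∀ k, Λ k → Ω → S k,
      (∀ k l, Measurable (f k l)) ∧
      ∀ φ ∈ Φ, P.map (fun ω k => f k (φ k) ω) = μ φ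

/-- A reduced coupling vector for the output distributions `μ φ`, `φ ∈ Φ`, given by its law `ν`: a
joint distribution of one output per value of each input with the prescribed marginal at every
allowable treatment. -/
def IsReducedCouplingVector (Φ : Set (∀ k, Λ k)) (μ : (∀ k, Λ k) → Measure (∀ k, S k))
    (ν : Measure (∀ k, Λ k → S k)) : Prop :=
  IsProbabilityMeasure ν ∧ ∀ φ ∈ Φ, ν.map (outputsAt φ) = μ φ

theorem measurable_outputsAt (φ : ∀ k, Λ k) :
    Measurable (outputsAt φ : (∀ k, Λ k → S k) → ∀ k, S k) :=
  measurable_pi_lambda _ fun k => (measurable_pi_apply (φ k)).comp (measurable_pi_apply k)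

variable {Φ : Set (∀ k, Λ k)} {μ : (∀ k, Λ k) → Measure (∀ k, S k)}

theorem SelectiveInfluences.exists_isReducedCouplingVector
    (h : SelectiveInfluences.{uι, uΛ, uS, w} Φ μ) : ∃ ν, IsReducedCouplingVector Φ μ ν := by
  obtain ⟨Ω, _, P, _, f, hf, hmap⟩ := h
  have measurable_record : Measurable fun ω k l => f k l ω :=
    measurable_pi_lambda _ fun k => measurable_pi_lambda _ (hf k)
  refine ⟨P.map fun ω k l => f k l ω,
    Measure.isProbabilityMeasure_map measurable_record.aemeasurable, fun φ hφ => ?_⟩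
  calc (P.map fun ω k l => f k l ω).map (outputsAt φ)
      = P.map (fun ω k => f k (φ k) ω) :=
        Measure.map_map (measurable_outputsAt φ) measurable_record
    _ = μ φ := hmap φ hφ

theorem IsReducedCouplingVector.selectiveInfluences {ν : Measure (∀ k, Λ k → S k)}
    (h : IsReducedCouplingVector Φ μ ν) :
    SelectiveInfluences.{uι, uΛ, uS, max uι uΛ uS} Φ μ :=
  ⟨∀ k, Λ k → S k, inferInstance, ν, h.1, fun k l record => record k l,
    fun k l => (measurable_pi_apply l).comp (measurable_pi_apply k), h.2⟩

end

theorem selective_influences_iff_reduced_coupling_vector_general_s3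
    {ι : Type uι} {Λ : ι → Type uΛ} {S : ι → Type uS} [∀ k, MeasurableSpace (S k)]
    (Φ : Set (∀ k, Λ k)) (μ : (∀ k, Λ k) → Measure (∀ k, S k)) :
    SelectiveInfluences.{uι, uΛ, uS, max uι uΛ uS} Φ μ ↔
      ∃ ν, IsReducedCouplingVector Φ μ ν :=
  ⟨fun h => h.exists_isReducedCouplingVector, fun ⟨_, hν⟩ => hν.selectiveInfluences⟩

/-- Joint Distribution Criterion, finite inputs. With inputs
`λ_k ∈ Λ_k = Fin (m k)` (`m k ≥ 1`), outputs valued in measurable spaces `S k`, a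
nonempty set `Φ` of allowable treatments, and joint output distributions `μ φ` for
`φ ∈ Φ`, the family `(μ φ)` satisfies selective influences if and only if there exists
a reduced coupling vector: a probability measure `ν` on the product space with one
coordinate per each value of each input, whose pushforward under
`h ↦ (h 1 (λ₁), …, h n (λₙ))` equals `μ φ` for every allowable treatment
`φ = (λ₁, …, λₙ)`. -/
theorem selective_influences_iff_reduced_coupling_vector
    {n : ℕ} (m : Fin n → ℕ) (hm : ∀ k, 1 ≤ m k)
    (S : Fin n → Type u) [∀ k, MeasurableSpace (S k)]
    (Φ : Set (∀ k, Fin (m k))) (hΦ : Φ.Nonempty)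
    (μ : (∀ k, Fin (m k)) → Measure (∀ k, S k))
    (hμ : ∀ φ ∈ Φ, IsProbabilityMeasure (μ φ)) :
    (∃ (Ω : Type u) (_ : MeasurableSpace Ω) (P : Measure Ω),
      IsProbabilityMeasure P ∧
      ∃ f : ∀ k, Fin (m k) → Ω → S k,
        (∀ k lam, Measurable (f k lam)) ∧
        ∀ φ ∈ Φ, Measure.map (fun ω k => f k (φ k) ω) P = μ φ)
    ↔
    (∃ ν : Measure (∀ k, Fin (m k) → S k), IsProbabilityMeasure ν ∧
      ∀ φ ∈ Φ, Measure.map (fun h : ∀ k, Fin (m k) → S k => fun k => h k (φ k)) ν = μ φ) :=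
  selective_influences_iff_reduced_coupling_vector_general_s3 Φ μ
end

section
/- (Joint Distribution Criterion, general version.) Let K be an arbitrary nonempty index set; for each k ∈ K let Λ_k be a nonempty set and (S_k, 𝔖_k) a measurable space; let Φ ⊆ ∏_{k∈K} Λ_k be nonempty; and for each φ ∈ Φ let μ_φ be a probability measure on the product measurable space ∏_{k∈K} S_k. Then there exist a probability space (Ω, 𝔉, P) and functions f_k : Λ_k × Ω → S_k (measurable in the second argument for each fixed λ ∈ Λ_k) such that for every φ ∈ Φ the pushforward of P under ω ↦ (f_k(φ(k), ω))_{k∈K} equals μ_φ, if and only if there exists a probability measure ν on the product measurable space ∏_{k∈K} ∏_{λ∈Λ_k} S_k such that for every φ ∈ Φ the pushforward of ν under h ↦ (h(k)(φ(k)))_{k∈K} equals μ_φ. -/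
open MeasureTheory

universe u v w

section ReducedCoupling

variable {K Ω : Type*} {Λ S : K → Type*}

/-- The reduced coupling vector of response functions `f k : Λ k → Ω → S k`: all responses to
all values of all inputs, produced jointly by a single state `ω` of the common source of
randomness. It is curried, with one block of coordinates `Λ k → S k` for each input `k`. -/
def reducedVector (f : ∀ k, Λ k → Ω → S k) (ω : Ω) : ∀ k, Λ k → S k :=
  fun k lam => f k lam ω

/-- The output vector at the treatment `φ`: the coordinates of a reduced coupling vector `h`
that `φ` selects, one for each input. -/
def outputAt (φ : ∀ k, Λ k) (h : ∀ k, Λ k → S k) : ∀ k, S k :=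
  fun k => h k (φ k)

variable [∀ k, MeasurableSpace (S k)]

theorem measurable_outputAt (φ : ∀ k, Λ k) :
    Measurable (outputAt φ : (∀ k, Λ k → S k) → ∀ k, S k) :=
  measurable_pi_lambda _ fun k => (measurable_pi_apply (φ k)).comp (measurable_pi_apply k)

variable [MeasurableSpace Ω] {f : ∀ k, Λ k → Ω → S k}

theorem measurable_reducedVector_iff :
    Measurable (reducedVector f) ↔ ∀ k lam, Measurable (f k lam) :=
  measurable_pi_iff.trans (forall_congr' fun _ => measurable_pi_iff)

theorem map_outputAt_map_reducedVector {P : Measure Ω}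
    (hf : AEMeasurable (reducedVector f) P) (φ : ∀ k, Λ k) :
    (P.map (reducedVector f)).map (outputAt φ) = P.map (fun ω k => f k (φ k) ω) :=
  AEMeasurable.map_map_of_aemeasurable (measurable_outputAt φ).aemeasurable hf

end ReducedCoupling

/-- Joint Distribution Criterion, general version. For an arbitrary
nonempty index set `K`, nonempty input-value sets `Λ k`, measurable output spaces `S k`,
a nonempty set `Φ` of allowable treatments and joint output distributions `μ φ` for
`φ ∈ Φ`, selective influences holds (existence of a common probability space and
functions `f k : Λ k × Ω → S k`, measurable in the second argument, whose joint
pushforward at every treatment is `μ φ`) if and only if there exists a reduced coupling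
vector: a probability measure `ν` on `∏ k, (Λ k → S k)` whose pushforward under
`h ↦ (k ↦ h k (φ k))` equals `μ φ` for every `φ ∈ Φ`. -/
theorem selective_influences_iff_reduced_coupling_vector_general
    {K : Type u} [Nonempty K]
    (Λ : K → Type v) [∀ k, Nonempty (Λ k)]
    (S : K → Type w) [∀ k, MeasurableSpace (S k)]
    (Φ : Set (∀ k, Λ k)) (hΦ : Φ.Nonempty)
    (μ : (∀ k, Λ k) → Measure (∀ k, S k))
    (hμ : ∀ φ ∈ Φ, IsProbabilityMeasure (μ φ)) :
    (∃ (Ω : Type (max u v w)) (_ : MeasurableSpace Ω) (P : Measure Ω),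
      IsProbabilityMeasure P ∧
      ∃ f : ∀ k, Λ k → Ω → S k,
        (∀ k lam, Measurable (f k lam)) ∧
        ∀ φ ∈ Φ, Measure.map (fun ω k => f k (φ k) ω) P = μ φ)
    ↔
    (∃ ν : Measure (∀ k, Λ k → S k), IsProbabilityMeasure ν ∧
      ∀ φ ∈ Φ, Measure.map (fun h : ∀ k, Λ k → S k => fun k => h k (φ k)) ν = μ φ) := by
  constructor
  · rintro ⟨Ω, _, P, _, f, hf, hfμ⟩
    have hvec : AEMeasurable (reducedVector f) P :=
      (measurable_reducedVector_iff.mpr hf).aemeasurable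
    exact ⟨P.map (reducedVector f), Measure.isProbabilityMeasure_map hvec,
      fun φ hφ => (map_outputAt_map_reducedVector hvec φ).trans (hfμ φ hφ)⟩
  · rintro ⟨ν, hν, hνμ⟩
    -- The reduced coupling vector of the coordinate evaluations is the identity.
    have heval : ∀ k lam, Measurable (fun h : ∀ k, Λ k → S k => h k lam) :=
      measurable_reducedVector_iff.mp measurable_id
    exact ⟨∀ k, Λ k → S k, inferInstance, ν, hν, fun k lam h => h k lam, heval, hνμ⟩
end

section
/- For k = 1,…,n let Λ_k be a nonempty finite set, let S_k be a standard Borel space (with its Borel sigma-algebra), let Φ ⊆ Λ₁ × ⋯ × Λₙ be nonempty, and for each φ ∈ Φ let μ_φ be a probability measure on S₁ × ⋯ × Sₙ. Then the family (μ_φ)_{φ∈Φ} satisfies selective influences if and only if there exist functions f_k : Λ_k × [0,1] → S_k, with f_k(λ, ·) measurable for every λ ∈ Λ_k, such that for every φ = (λ₁,…,λₙ) ∈ Φ the pushforward of the uniform (Lebesgue) probability measure on [0,1] under t ↦ (f₁(λ₁,t),…,fₙ(λₙ,t)) equals μ_φ. That is, the common source of randomness R in the definition of selective influences can always be chosen to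 be a uniformly distributed random variable on the interval [0,1]. -/
open MeasureTheory

universe u v

/-- The uniform (Lebesgue) probability measure on the unit interval `[0,1]`,
obtained from Lebesgue measure on `ℝ`. -/
noncomputable def uniform01 : Measure (Set.Icc (0 : ℝ) 1) :=
  Measure.comap Subtype.val volume

/-!
A treatment reads off one coordinate `(k, φ k)` for each `k` from the table of all potential
outputs `f k l ω`, so a representation can be moved to the law of that table. The tables form
a countable product of standard Borel spaces, hence a standard Borel space, and every probability
measure on such a space is the image of the uniform measure on `[0,1]`.
-/

universe w

section Representations

variable {ι Ω Ω' : Type*} {Λ S : ι → Type*}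

/-- The random table of potential outputs: the outputs at all input values simultaneously, as
functions of the same random outcome. It couples the outputs at all treatments. -/
def outputTable (f : ∀ k, Λ k → Ω → S k) (ω : Ω) (k : ι) (l : Λ k) : S k :=
  f k l ω

variable [MeasurableSpace Ω] [MeasurableSpace Ω'] [∀ k, MeasurableSpace (S k)]

/-- The functions `f k : Λ k → Ω → S k`, driven by the common source of randomness `(Ω, P)`,
represent the family of joint distributions `(μ φ)` indexed by the allowable treatments `φ ∈ Φ`.
The family satisfies selective influences when it is represented over some probability space.
The family `μ` is encoded as a total function, whose values outside `Φ` are ignored. -/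
def IsSelectiveRepresentation (P : Measure Ω) (Φ : Set (∀ k, Λ k))
    (μ : (∀ k, Λ k) → Measure (∀ k, S k)) (f : ∀ k, Λ k → Ω → S k) : Prop :=
  (∀ k l, Measurable (f k l)) ∧ ∀ φ ∈ Φ, P.map (fun ω k => f k (φ k) ω) = μ φ

variable {P : Measure Ω} {Q : Measure Ω'} {Φ : Set (∀ k, Λ k)}
  {μ : (∀ k, Λ k) → Measure (∀ k, S k)} {f : ∀ k, Λ k → Ω → S k}

theorem IsSelectiveRepresentation.comp {g : Ω' → Ω} (hf : IsSelectiveRepresentation P Φ μ f)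
    (hg : MeasurePreserving g Q P) :
    IsSelectiveRepresentation Q Φ μ (fun k l => f k l ∘ g) := by
  refine ⟨fun k l => (hf.1 k l).comp hg.measurable, fun φ hφ => ?_⟩
  have hfφ : Measurable fun ω k => f k (φ k) ω := measurable_pi_lambda _ fun k => hf.1 k (φ k)
  calc Q.map ((fun ω k => f k (φ k) ω) ∘ g)
      = (Q.map g).map (fun ω k => f k (φ k) ω) := (Measure.map_map hfφ hg.measurable).symm
    _ = μ φ := by rw [hg.map_eq, hf.2 φ hφ]

theorem measurable_outputTable (hf : ∀ k l, Measurable (f k l)) :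
    Measurable (outputTable f) :=
  measurable_pi_lambda _ fun k => measurable_pi_lambda _ fun l => hf k l

theorem IsSelectiveRepresentation.eval_outputTable (hf : IsSelectiveRepresentation P Φ μ f) :
    IsSelectiveRepresentation (P.map (outputTable f)) Φ μ
      (fun k l (x : ∀ k, Λ k → S k) => x k l) := by
  have heval (k : ι) (l : Λ k) : Measurable fun x : ∀ k, Λ k → S k => x k l :=
    (measurable_pi_apply l).comp (measurable_pi_apply k)
  refine ⟨heval, fun φ hφ => ?_⟩
  rw [Measure.map_map (measurable_pi_lambda _ fun k => heval k (φ k))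
    (measurable_outputTable hf.1)]
  exact hf.2 φ hφ

end Representations

section UniformSource

instance isProbabilityMeasure_uniform01 : IsProbabilityMeasure uniform01 :=
  inferInstanceAs (IsProbabilityMeasure (volume : Measure unitInterval))

theorem exists_measurePreserving_uniform01 {T : Type*} [MeasurableSpace T] [StandardBorelSpace T]
    (P : Measure T) [IsProbabilityMeasure P] :
    ∃ g : Set.Icc (0 : ℝ) 1 → T, MeasurePreserving g uniform01 P := by
  have : Nonempty T := P.nonempty_of_neZero
  obtain ⟨g, hg, hgP⟩ := P.exists_measurable_map_eq
  exact ⟨g, hg, hgP⟩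

variable {ι : Type*} {Λ S : ι → Type*} [∀ k, MeasurableSpace (S k)] {Φ : Set (∀ k, Λ k)}
  {μ : (∀ k, Λ k) → Measure (∀ k, S k)}

theorem IsSelectiveRepresentation.exists_uniform01 [Countable ι] [∀ k, Countable (Λ k)]
    [∀ k, StandardBorelSpace (S k)] {Ω : Type*} [MeasurableSpace Ω] {P : Measure Ω}
    [IsProbabilityMeasure P] {f : ∀ k, Λ k → Ω → S k} (hf : IsSelectiveRepresentation P Φ μ f) :
    ∃ g : ∀ k, Λ k → Set.Icc (0 : ℝ) 1 → S k, IsSelectiveRepresentation uniform01 Φ μ g := by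
  have : IsProbabilityMeasure (P.map (outputTable f)) :=
    Measure.isProbabilityMeasure_map (measurable_outputTable hf.1).aemeasurable
  obtain ⟨g, hg⟩ := exists_measurePreserving_uniform01 (P.map (outputTable f))
  exact ⟨_, hf.eval_outputTable.comp hg⟩

variable (Φ μ) in
theorem selective_influences_iff_uniform_source_general [Countable ι] [∀ k, Countable (Λ k)]
    [∀ k, StandardBorelSpace (S k)] :
    (∃ (Ω : Type w) (_ : MeasurableSpace Ω) (P : Measure Ω),
      IsProbabilityMeasure P ∧ ∃ f : ∀ k, Λ k → Ω → S k, IsSelectiveRepresentation P Φ μ f)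
    ↔ ∃ f : ∀ k, Λ k → Set.Icc (0 : ℝ) 1 → S k, IsSelectiveRepresentation uniform01 Φ μ f := by
  constructor
  · rintro ⟨Ω, _, P, _, f, hf⟩
    exact hf.exists_uniform01
  · rintro ⟨f, hf⟩
    have hdown : MeasurePreserving ULift.down (uniform01.map ULift.up) uniform01 :=
      (measurable_up.measurePreserving uniform01).symm MeasurableEquiv.ulift.symm
    exact ⟨ULift.{w} (Set.Icc (0 : ℝ) 1), inferInstance, uniform01.map ULift.up,
      inferInstance, _, hf.comp hdown⟩

end UniformSource

/-- With finitely many inputs having finitely many values each and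
outputs valued in standard Borel spaces, a family of joint output distributions
satisfies selective influences if and only if the common source of randomness can be
chosen to be a uniformly distributed random variable on `[0,1]`: there are functions
`f k : Λ k × [0,1] → S k`, measurable for each fixed input value, such that the
pushforward of the uniform measure on `[0,1]` under `t ↦ (f₁(λ₁,t),…,fₙ(λₙ,t))`
equals `μ φ` for every allowable treatment `φ = (λ₁,…,λₙ)`. -/
theorem selective_influences_iff_uniform_source
    {n : ℕ} (Λ : Fin n → Type v) [∀ k, Fintype (Λ k)] [∀ k, Nonempty (Λ k)]
    (S : Fin n → Type u) [∀ k, MeasurableSpace (S k)] [∀ k, StandardBorelSpace (S k)]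
    (Φ : Set (∀ k, Λ k)) (hΦ : Φ.Nonempty)
    (μ : (∀ k, Λ k) → Measure (∀ k, S k))
    (hμ : ∀ φ ∈ Φ, IsProbabilityMeasure (μ φ)) :
    (∃ (Ω : Type (max u v)) (_ : MeasurableSpace Ω) (P : Measure Ω),
      IsProbabilityMeasure P ∧
      ∃ f : ∀ k, Λ k → Ω → S k,
        (∀ k lam, Measurable (f k lam)) ∧
        ∀ φ ∈ Φ, Measure.map (fun ω k => f k (φ k) ω) P = μ φ)
    ↔
    (∃ f : ∀ k, Λ k → Set.Icc (0 : ℝ) 1 → S k,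
      (∀ k lam, Measurable (f k lam)) ∧
      ∀ φ ∈ Φ, Measure.map (fun t k => f k (φ k) t) uniform01 = μ φ) :=
  selective_influences_iff_uniform_source_general Φ μ
end

section
/- (Complete marginal selectivity.) For k = 1,…,n let Λ_k be a nonempty set, (S_k, 𝔖_k) a measurable space, Φ ⊆ Λ₁ × ⋯ × Λₙ nonempty, and (μ_φ)_{φ∈Φ} a family of probability measures on S₁ × ⋯ × Sₙ satisfying selective influences. Then for every subset I ⊆ {1,…,n} and all treatments φ, φ' ∈ Φ such that φ_k = φ'_k for every k ∈ I, the pushforwards of μ_φ and of μ_{φ'} under the projection (a₁,…,aₙ) ↦ (a_k)_{k∈I} coincide. In particular (simple marginal selectivity), the distribution of the k-th output depends only on the value of the k-th input. -/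
open MeasureTheory

universe u v

theorem dependsOn_eval {ι : Type*} {S : ι → Type*} (k : ι) :
    DependsOn (fun a : ∀ k, S k => a k) {k} :=
  fun _ _ h => h k rfl

theorem map_map_congr_of_dependsOn {ι Ω T : Type*} {S : ι → Type*} [MeasurableSpace Ω]
    [MeasurableSpace T] [∀ k, MeasurableSpace (S k)] {P : Measure Ω} {X Y : Ω → ∀ k, S k}
    {I : Set ι} {g : (∀ k, S k) → T} (hX : AEMeasurable X P) (hY : AEMeasurable Y P)
    (hg : Measurable g) (hgI : DependsOn g I) (hXY : ∀ᵐ ω ∂P, ∀ k ∈ I, X ω k = Y ω k) :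
    (P.map X).map g = (P.map Y).map g := by
  have hcomp : g ∘ X =ᵐ[P] g ∘ Y := hXY.mono fun _ hω => hgI hω
  rw [AEMeasurable.map_map_of_aemeasurable hg.aemeasurable hX,
    AEMeasurable.map_map_of_aemeasurable hg.aemeasurable hY, Measure.map_congr hcomp]

theorem complete_marginal_selectivity_general {ι Ω T : Type*} {Λ S : ι → Type*}
    [MeasurableSpace Ω] [MeasurableSpace T] [∀ k, MeasurableSpace (S k)]
    {Φ : Set (∀ k, Λ k)} {μ : (∀ k, Λ k) → Measure (∀ k, S k)}
    {P : Measure Ω} {f : ∀ k, Λ k → Ω → S k} (hf : ∀ k l, Measurable (f k l))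
    (hμ : ∀ φ ∈ Φ, P.map (fun ω k => f k (φ k) ω) = μ φ)
    {I : Set ι} {g : (∀ k, S k) → T} (hg : Measurable g) (hgI : DependsOn g I)
    {φ φ' : ∀ k, Λ k} (hφ : φ ∈ Φ) (hφ' : φ' ∈ Φ) (hagree : ∀ k ∈ I, φ k = φ' k) :
    (μ φ).map g = (μ φ').map g := by
  have houtput (ψ : ∀ k, Λ k) : Measurable fun ω k => f k (ψ k) ω :=
    measurable_pi_lambda _ fun k => hf k (ψ k)
  rw [← hμ φ hφ, ← hμ φ' hφ']
  refine map_map_congr_of_dependsOn (houtput φ).aemeasurable (houtput φ').aemeasurable hg hgI ?_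
  exact .of_forall fun ω k hk => congrArg (f k · ω) (hagree k hk)

/-- Complete marginal selectivity. If a family `(μ φ)_{φ ∈ Φ}` of
joint output distributions satisfies selective influences, then for every subset `I` of
output indices and all allowable treatments `φ, φ'` agreeing on the inputs with indices
in `I`, the pushforwards of `μ φ` and `μ φ'` under the projection onto the coordinates
in `I` coincide. In particular (simple marginal selectivity) the distribution of the
`k`-th output depends only on the value of the `k`-th input. -/
theorem complete_marginal_selectivity
    {n : ℕ} (Λ : Fin n → Type u) [∀ k, Nonempty (Λ k)]
    (S : Fin n → Type v) [∀ k, MeasurableSpace (S k)]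
    (Φ : Set (∀ k, Λ k)) (hΦ : Φ.Nonempty)
    (μ : (∀ k, Λ k) → Measure (∀ k, S k))
    (hsel : ∃ (Ω : Type (max u v)) (_ : MeasurableSpace Ω) (P : Measure Ω),
      IsProbabilityMeasure P ∧
      ∃ f : ∀ k, Λ k → Ω → S k,
        (∀ k lam, Measurable (f k lam)) ∧
        ∀ φ ∈ Φ, Measure.map (fun ω k => f k (φ k) ω) P = μ φ) :
    (∀ (I : Set (Fin n)), ∀ φ ∈ Φ, ∀ φ' ∈ Φ, (∀ k ∈ I, φ k = φ' k) →
      Measure.map (fun a : ∀ k, S k => fun k : I => a k) (μ φ)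
        = Measure.map (fun a : ∀ k, S k => fun k : I => a k) (μ φ'))
    ∧
    (∀ (k : Fin n), ∀ φ ∈ Φ, ∀ φ' ∈ Φ, φ k = φ' k →
      Measure.map (fun a : ∀ k, S k => a k) (μ φ)
        = Measure.map (fun a : ∀ k, S k => a k) (μ φ')) := by
  obtain ⟨Ω, _, P, _, f, hf, hμ⟩ := hsel
  exact ⟨fun I φ hφ φ' hφ' hagree => complete_marginal_selectivity_general hf hμ
      (Set.measurable_restrict I) (Set.dependsOn_domRestrict I) hφ hφ' hagree,
    fun k φ hφ φ' hφ' hk => complete_marginal_selectivity_general hf hμ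
      (measurable_pi_apply k) (dependsOn_eval k) hφ hφ' (by simpa using hk)⟩
end

section
/- (Invariance under input-value-specific transformations.) For k = 1,…,n let Λ_k be a nonempty set, (S_k, 𝔖_k) and (T_k, 𝔗_k) measurable spaces, Φ ⊆ Λ₁ × ⋯ × Λₙ nonempty, and suppose the family (μ_φ)_{φ∈Φ} of probability measures on S₁ × ⋯ × Sₙ satisfies selective influences. For each k let g_k : Λ_k × S_k → T_k be a function with g_k(λ, ·) measurable for every λ ∈ Λ_k. Define, for each φ = (λ₁,…,λₙ) ∈ Φ, the probability measure ν_φ on T₁ × ⋯ × Tₙ as the pushforward of μ_φ under (a₁,…,aₙ) ↦ (g₁(λ₁,a₁),…,gₙ(λₙ,aₙ)). Then the family (ν_φ)_{φ∈Φ} also satisfies selective influences (with the same inputs and allowable treatments). -/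
open MeasureTheory

universe u v w

/-- The family `(μ φ)_{φ ∈ Φ}` satisfies selective influences: all of its members are realized on
one probability space by random outputs `f k`, the `k`-th of which depends on the treatment `φ`
only through the `k`-th input value `φ k`. The universe `t` of the probability space is a
parameter, as a proposition cannot quantify over all universes; the values of `μ` outside `Φ` are
irrelevant. -/
def HasSelectiveInfluences.{t, i, a, b} {ι : Type i} {Λ : ι → Type a} {S : ι → Type b}
    [∀ k, MeasurableSpace (S k)] (Φ : Set (∀ k, Λ k)) (μ : (∀ k, Λ k) → Measure (∀ k, S k)) :
    Prop :=
  ∃ (Ω : Type t) (_ : MeasurableSpace Ω) (P : Measure Ω),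
    IsProbabilityMeasure P ∧
    ∃ f : ∀ k, Λ k → Ω → S k,
      (∀ k lam, Measurable (f k lam)) ∧
      ∀ φ ∈ Φ, P.map (fun ω k => f k (φ k) ω) = μ φ

section

variable {ι : Type*} {Λ S T : ι → Type*}
  [∀ k, MeasurableSpace (S k)] [∀ k, MeasurableSpace (T k)]

theorem measurable_piMap {h : ∀ k, S k → T k} (hh : ∀ k, Measurable (h k)) :
    Measurable (Pi.map h) :=
  measurable_pi_lambda _ fun k => (hh k).comp (measurable_pi_apply k)

/-- The probability space that realizes `μ` also realizes `ν`, by the outputs `g k lam ∘ f k lam`: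
the transformation of the `k`-th output sees no input value but the `k`-th. -/
theorem selective_influences_invariant_under_input_specific_transformations_general.{t}
    {Φ : Set (∀ k, Λ k)} {μ : (∀ k, Λ k) → Measure (∀ k, S k)}
    (hsel : HasSelectiveInfluences.{t} Φ μ)
    {g : ∀ k, Λ k → S k → T k} (hg : ∀ k lam, Measurable (g k lam))
    {ν : (∀ k, Λ k) → Measure (∀ k, T k)}
    (hν : ∀ φ ∈ Φ, ν φ = (μ φ).map (Pi.map fun k => g k (φ k))) :
    HasSelectiveInfluences.{t} Φ ν := by
  obtain ⟨Ω, _, P, hP, f, hf, hmap⟩ := hsel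
  refine ⟨Ω, _, P, hP, fun k lam => g k lam ∘ f k lam, fun k lam => (hg k lam).comp (hf k lam),
    fun φ hφ => ?_⟩
  have houtputs : Measurable fun ω k => f k (φ k) ω := measurable_pi_lambda _ fun k => hf k (φ k)
  have htransform : Measurable (Pi.map fun k => g k (φ k)) := measurable_piMap fun k => hg k (φ k)
  calc P.map (fun ω k => g k (φ k) (f k (φ k) ω))
      = (P.map fun ω k => f k (φ k) ω).map (Pi.map fun k => g k (φ k)) :=
        (Measure.map_map htransform houtputs).symm
    _ = (μ φ).map (Pi.map fun k => g k (φ k)) := by rw [hmap φ hφ]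
    _ = ν φ := (hν φ hφ).symm

end

/-- Invariance under input-value-specific transformations. If the
family `(μ φ)_{φ ∈ Φ}` of joint output distributions satisfies selective influences and
`g k : Λ k × S k → T k` are functions measurable in the second argument, then the
transformed family `(ν φ)_{φ ∈ Φ}`, where `ν φ` is the pushforward of `μ φ` under
`(a₁,…,aₙ) ↦ (g₁(λ₁,a₁),…,gₙ(λₙ,aₙ))` for `φ = (λ₁,…,λₙ)`, also satisfies selective
influences with the same inputs and allowable treatments. -/
theorem selective_influences_invariant_under_input_specific_transformations
    {n : ℕ} (Λ : Fin n → Type u) [∀ k, Nonempty (Λ k)]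
    (S : Fin n → Type v) [∀ k, MeasurableSpace (S k)]
    (T : Fin n → Type w) [∀ k, MeasurableSpace (T k)]
    (Φ : Set (∀ k, Λ k)) (hΦ : Φ.Nonempty)
    (μ : (∀ k, Λ k) → Measure (∀ k, S k))
    (hsel : ∃ (Ω : Type (max u v)) (_ : MeasurableSpace Ω) (P : Measure Ω),
      IsProbabilityMeasure P ∧
      ∃ f : ∀ k, Λ k → Ω → S k,
        (∀ k lam, Measurable (f k lam)) ∧
        ∀ φ ∈ Φ, Measure.map (fun ω k => f k (φ k) ω) P = μ φ)
    (g : ∀ k, Λ k → S k → T k)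
    (hg : ∀ k lam, Measurable (g k lam))
    (ν : (∀ k, Λ k) → Measure (∀ k, T k))
    (hν : ∀ φ ∈ Φ,
      ν φ = Measure.map (fun a : ∀ k, S k => fun k => g k (φ k) (a k)) (μ φ)) :
    ∃ (Ω : Type (max u v)) (_ : MeasurableSpace Ω) (P : Measure Ω),
      IsProbabilityMeasure P ∧
      ∃ f : ∀ k, Λ k → Ω → T k,
        (∀ k lam, Measurable (f k lam)) ∧
        ∀ φ ∈ Φ, Measure.map (fun ω k => f k (φ k) ω) P = ν φ :=
  selective_influences_invariant_under_input_specific_transformations_general hsel hg hν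
end

section
/- (Distance test: chain inequality for treatment-realizable sequences.) For k = 1,…,n let Λ_k be a nonempty set, let S be a measurable space serving as the common set of values of all outputs, let Φ ⊆ Λ₁ × ⋯ × Λₙ be nonempty, and suppose the family (μ_φ)_{φ∈Φ} of probability measures on Sⁿ satisfies selective influences. Let D : S × S → ℝ be a nonnegative measurable function with D(x,x) = 0 and D(x,y) + D(y,z) ≥ D(x,z) for all x, y, z ∈ S, and assume all the integrals below are finite. Let l ≥ 3, let k₁,…,k_l ∈ {1,…,n} with k₁ ≠ k_l and k_{i−1} ≠ k_i for i = 2,…,l, let j_i ∈ Λ_{k_i} for each i, let ψ ∈ Φ satisfy ψ_{k₁} = j₁ and ψ_{k_l} = j_l, and for each i = 2,…,l let φ^i ∈ Φ satisfy φ^i_{k_{i−1}} = j_{i−1} and φ^i_{k_i} = j_i. Then ∫ D(a_{k₁}, a_{k_l}) dμ_ψ(a) ≤ Σ_{i=2}^{l} ∫ D(a_{k_{i−1}}, a_{k_i}) dμ_{φ^i}(a). -/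
open MeasureTheory

universe u v

/-!
Selective influences put all the outputs on one probability space, as a single random variable
for each value of each input. The law of a pair of outputs then depends only on the two input
values concerned, so the pairs observed at the different treatments may all be replaced by pairs of
consecutive terms of one random sequence, along which the triangle inequality telescopes pointwise.
-/

open ProbabilityTheory

lemma le_sum_Ico_of_triangle {α M : Type*} [AddCommMonoid M] [Preorder M] [AddRightMono M]
    {D : α → α → M} (hD : ∀ x y z, D x z ≤ D x y + D y z) (x : ℕ → α) {m n : ℕ} (hmn : m < n) :
    D (x m) (x n) ≤ ∑ i ∈ Finset.Ico m n, D (x i) (x (i + 1)) := by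
  induction n, hmn using Nat.le_induction with
  | base => simp
  | succ n hmn ih =>
    calc D (x m) (x (n + 1))
      _ ≤ D (x m) (x n) + D (x n) (x (n + 1)) := hD _ _ _
      _ ≤ (∑ i ∈ Finset.Ico m n, D (x i) (x (i + 1))) + D (x n) (x (n + 1)) := by gcongr
      _ = ∑ i ∈ Finset.Ico m (n + 1), D (x i) (x (i + 1)) :=
        (Finset.sum_Ico_succ_top (Nat.le_of_succ_le hmn) _).symm

lemma integral_le_sum_Ico_integral_of_triangle {Ω S : Type*} [MeasurableSpace Ω] {P : Measure Ω}
    {D : S → S → ℝ} (hD : ∀ x y z, D x z ≤ D x y + D y z) {X : ℕ → Ω → S} {m n : ℕ} (hmn : m < n)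
    (hends : Integrable (fun ω => D (X m ω) (X n ω)) P)
    (hsteps : ∀ i, m ≤ i → i < n → Integrable (fun ω => D (X i ω) (X (i + 1) ω)) P) :
    ∫ ω, D (X m ω) (X n ω) ∂P ≤
      ∑ i ∈ Finset.Ico m n, ∫ ω, D (X i ω) (X (i + 1) ω) ∂P := by
  have hsteps' : ∀ i ∈ Finset.Ico m n, Integrable (fun ω => D (X i ω) (X (i + 1) ω)) P :=
    fun i hi => hsteps i (Finset.mem_Ico.1 hi).1 (Finset.mem_Ico.1 hi).2
  rw [← integral_finsetSum _ hsteps']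
  exact integral_mono hends (integrable_finsetSum _ hsteps')
    fun ω => le_sum_Ico_of_triangle hD (X · ω) hmn

section JointRealization

variable {ι Ω : Type*} {Λ : ι → Type*} [MeasurableSpace Ω] {P : Measure Ω} {Φ : Set (∀ k, Λ k)}

/-- The random variables `f k lam` on `(Ω, P)`, one for each value `lam` of each input `k`, realize
the joint distributions `μ φ` of the outputs at all treatments `φ ∈ Φ` simultaneously. Selective
influences is the existence of such a realization on a probability space; here `P` may be any
measure and each output may have its own value space. -/
structure IsJointRealization {S : ι → Type*} [∀ k, MeasurableSpace (S k)] (P : Measure Ω)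
    (f : ∀ k, Λ k → Ω → S k) (Φ : Set (∀ k, Λ k)) (μ : (∀ k, Λ k) → Measure (∀ k, S k)) :
    Prop where
  measurable : ∀ k lam, Measurable (f k lam)
  map_eq : ∀ φ ∈ Φ, P.map (fun ω k => f k (φ k) ω) = μ φ

lemma IsJointRealization.identDistrib_pair {S : ι → Type*} [∀ k, MeasurableSpace (S k)]
    {f : ∀ k, Λ k → Ω → S k} {μ : (∀ k, Λ k) → Measure (∀ k, S k)}
    (h : IsJointRealization P f Φ μ) {φ : ∀ k, Λ k} (hφ : φ ∈ Φ) {p q : ι} {a : Λ p} {b : Λ q}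
    (hp : φ p = a) (hq : φ q = b) :
    IdentDistrib (fun x => (x p, x q)) (fun ω => (f p a ω, f q b ω)) (μ φ) P := by
  subst hp hq
  have hpair : Measurable fun x : ∀ k, S k => (x p, x q) := by fun_prop
  have houtputs : Measurable fun ω k => f k (φ k) ω :=
    measurable_pi_lambda _ fun k => h.measurable k (φ k)
  refine ⟨hpair.aemeasurable, (hpair.comp houtputs).aemeasurable, ?_⟩
  rw [← h.map_eq φ hφ, Measure.map_map hpair houtputs, Function.comp_def]

theorem distance_test_chain_inequality_general {S : Type*} [MeasurableSpace S]
    {f : ∀ k, Λ k → Ω → S} {μ : (∀ k, Λ k) → Measure (ι → S)}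
    (h : IsJointRealization P f Φ μ)
    {D : S → S → ℝ} (hDmeas : Measurable fun q : S × S => D q.1 q.2)
    (hD : ∀ x y z, D x z ≤ D x y + D y z)
    {m n : ℕ} (hmn : m < n) {k : ℕ → ι} {j : ∀ i, Λ (k i)}
    {ψ : ∀ k, Λ k} (hψ : ψ ∈ Φ) (hψm : ψ (k m) = j m) (hψn : ψ (k n) = j n)
    {φ : ℕ → ∀ k, Λ k} (hφ : ∀ i, m ≤ i → i < n → φ i ∈ Φ)
    (hφcur : ∀ i, m ≤ i → i < n → φ i (k i) = j i)
    (hφnext : ∀ i, m ≤ i → i < n → φ i (k (i + 1)) = j (i + 1))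
    (hends : Integrable (fun a => D (a (k m)) (a (k n))) (μ ψ))
    (hsteps : ∀ i, m ≤ i → i < n → Integrable (fun a => D (a (k i)) (a (k (i + 1)))) (μ (φ i))) :
    ∫ a, D (a (k m)) (a (k n)) ∂μ ψ ≤
      ∑ i ∈ Finset.Ico m n, ∫ a, D (a (k i)) (a (k (i + 1))) ∂μ (φ i) := by
  let X : ℕ → Ω → S := fun i => f (k i) (j i)
  have law_ends : IdentDistrib (fun a => D (a (k m)) (a (k n))) (fun ω => D (X m ω) (X n ω))
      (μ ψ) P :=
    (h.identDistrib_pair hψ hψm hψn).comp hDmeas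
  have law_step (i : ℕ) (hmi : m ≤ i) (hin : i < n) :
      IdentDistrib (fun a => D (a (k i)) (a (k (i + 1)))) (fun ω => D (X i ω) (X (i + 1) ω))
        (μ (φ i)) P :=
    (h.identDistrib_pair (hφ i hmi hin) (hφcur i hmi hin) (hφnext i hmi hin)).comp hDmeas
  calc ∫ a, D (a (k m)) (a (k n)) ∂μ ψ
    _ = ∫ ω, D (X m ω) (X n ω) ∂P := law_ends.integral_eq
    _ ≤ ∑ i ∈ Finset.Ico m n, ∫ ω, D (X i ω) (X (i + 1) ω) ∂P :=
      integral_le_sum_Ico_integral_of_triangle hD hmn (law_ends.integrable_iff.1 hends)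
        fun i hmi hin => (law_step i hmi hin).integrable_iff.1 (hsteps i hmi hin)
    _ = ∑ i ∈ Finset.Ico m n, ∫ a, D (a (k i)) (a (k (i + 1))) ∂μ (φ i) :=
      Finset.sum_congr rfl fun i hi =>
        (law_step i (Finset.mem_Ico.1 hi).1 (Finset.mem_Ico.1 hi).2).integral_eq.symm

end JointRealization

/-- Distance test: chain inequality for treatment-realizable
sequences. Suppose the family `(μ φ)_{φ ∈ Φ}` of joint distributions of `n` outputs
with a common value space `S` satisfies selective influences, and `D` is a measurable
pseudo-quasi-metric on `S`. For any treatment-realizable sequence of input values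
`λ^{k 1} = j 1, …, λ^{k l} = j l` (`l ≥ 3`, with `k 1 ≠ k l` and consecutive indices
distinct), witnessed by an allowable treatment `ψ` containing the first and last values
and allowable treatments `φ i` containing each consecutive pair, and assuming all the
integrals involved are finite, the chain inequality holds:
`∫ D(a_{k 1}, a_{k l}) dμ_ψ ≤ Σ_{i=2}^{l} ∫ D(a_{k (i-1)}, a_{k i}) dμ_{φ i}`. -/
theorem distance_test_chain_inequality
    {n : ℕ} (Λ : Fin n → Type u) [∀ k, Nonempty (Λ k)]
    {S : Type v} [MeasurableSpace S]
    (Φ : Set (∀ k, Λ k)) (hΦ : Φ.Nonempty)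
    (μ : (∀ k, Λ k) → Measure (Fin n → S))
    (hsel : ∃ (Ω : Type (max u v)) (_ : MeasurableSpace Ω) (P : Measure Ω),
      IsProbabilityMeasure P ∧
      ∃ f : ∀ k, Λ k → Ω → S,
        (∀ k lam, Measurable (f k lam)) ∧
        ∀ φ ∈ Φ, Measure.map (fun ω k => f k (φ k) ω) P = μ φ)
    (D : S → S → ℝ)
    (hDmeas : Measurable fun q : S × S => D q.1 q.2)
    (hDnonneg : ∀ x y, 0 ≤ D x y)
    (hDzero : ∀ x, D x x = 0)
    (hDtriangle : ∀ x y z, D x z ≤ D x y + D y z)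
    (l : ℕ) (hl : 3 ≤ l)
    (k : ℕ → Fin n)
    (hkends : k 1 ≠ k l)
    (hkcons : ∀ i, 2 ≤ i → i ≤ l → k (i - 1) ≠ k i)
    (j : ∀ i : ℕ, Λ (k i))
    (ψ : ∀ k', Λ k') (hψΦ : ψ ∈ Φ)
    (hψ1 : ψ (k 1) = j 1) (hψl : ψ (k l) = j l)
    (φ : ℕ → ∀ k', Λ k')
    (hφΦ : ∀ i, 2 ≤ i → i ≤ l → φ i ∈ Φ)
    (hφprev : ∀ i, 2 ≤ i → i ≤ l → φ i (k (i - 1)) = j (i - 1))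
    (hφcur : ∀ i, 2 ≤ i → i ≤ l → φ i (k i) = j i)
    (hint0 : Integrable (fun a : Fin n → S => D (a (k 1)) (a (k l))) (μ ψ))
    (hint : ∀ i, 2 ≤ i → i ≤ l →
      Integrable (fun a : Fin n → S => D (a (k (i - 1))) (a (k i))) (μ (φ i))) :
    (∫ a, D (a (k 1)) (a (k l)) ∂μ ψ) ≤
      ∑ i ∈ Finset.Icc 2 l, ∫ a, D (a (k (i - 1))) (a (k i)) ∂μ (φ i) := by
  obtain ⟨Ω, _, P, -, f, hf, hmap⟩ := hsel
  rw [← Finset.Ico_add_one_right_eq_Icc, ← Finset.sum_Ico_add' _ 1 l 1]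
  exact distance_test_chain_inequality_general ⟨hf, hmap⟩ hDmeas hDtriangle (by lia) hψΦ hψ1 hψl
    (fun i hi => hφΦ (i + 1) (Nat.succ_le_succ hi))
    (fun i hi => hφprev (i + 1) (Nat.succ_le_succ hi))
    (fun i hi => hφcur (i + 1) (Nat.succ_le_succ hi))
    hint0 (fun i hi => hint (i + 1) (Nat.succ_le_succ hi))
end

section
/- (Cosphericity test, necessity.) Let Λ₁ = Λ₂ = {1,2} and let Φ consist of all four treatments (i,j), i,j ∈ {1,2}. For each (i,j) let μ_{ij} be a probability measure on ℝ × ℝ (with the Borel product sigma-algebra) whose coordinate functions X(x,y) = x and Y(x,y) = y are square-integrable with strictly positive variances, and let ρ_{ij} denote the correlation of X and Y under μ_{ij}. If the family (μ_{ij}) satisfies selective influences, then |ρ₁₁ρ₁₂ − ρ₂₁ρ₂₂| ≤ √(1 − ρ₁₁²)·√(1 − ρ₁₂²) + √(1 − ρ₂₁²)·√(1 − ρ₂₂²). -/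
open MeasureTheory

/-- The correlation of the two coordinate functions under a measure on `ℝ × ℝ`. -/
noncomputable def coordCorrelation (μ : Measure (ℝ × ℝ)) : ℝ :=
  ((∫ q, q.1 * q.2 ∂μ) - (∫ q, q.1 ∂μ) * ∫ q, q.2 ∂μ) /
    (Real.sqrt ((∫ q, q.1 ^ 2 ∂μ) - (∫ q, q.1 ∂μ) ^ 2) *
      Real.sqrt ((∫ q, q.2 ^ 2 ∂μ) - (∫ q, q.2 ∂μ) ^ 2))

/-!
Selective influences realize all four outputs `X, X', Y, Y'` on one probability space. There
`ρ(Y, Y')`, which no treatment observes, is constrained by `X` alone: Cauchy–Schwarz for the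
residuals of the regressions of `Y` and `Y'` on `X` puts `ρ(Y, Y')` within
`√(1 - ρ(X, Y)²) √(1 - ρ(X, Y')²)` of `ρ(X, Y) ρ(X, Y')`. The same holds for `X'`, and the triangle
inequality eliminates `ρ(Y, Y')`.
-/

open ProbabilityTheory

section Covariance

variable {Ω : Type*} {mΩ : MeasurableSpace Ω} {P : Measure Ω} [IsFiniteMeasure P]
  {U V W X Y : Ω → ℝ}

lemma covariance_sq_le_variance_mul_variance (hX : MemLp X 2 P) (hY : MemLp Y 2 P) :
    cov[X, Y; P] ^ 2 ≤ Var[X; P] * Var[Y; P] := by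
  have quadratic_nonneg (t : ℝ) :
      0 ≤ Var[Y; P] * (t * t) + -2 * cov[X, Y; P] * t + Var[X; P] := by
    have variance_sub_smul : Var[X - t • Y; P] =
        Var[Y; P] * (t * t) + -2 * cov[X, Y; P] * t + Var[X; P] := by
      rw [variance_sub hX (hY.const_smul t), covariance_smul_right, variance_smul]
      ring
    exact variance_sub_smul ▸ variance_nonneg _ _
  have discrim_nonpos := discrim_le_zero quadratic_nonneg
  rw [discrim] at discrim_nonpos
  linarith

lemma abs_covariance_le_sqrt_variance_mul_sqrt_variance (hX : MemLp X 2 P) (hY : MemLp Y 2 P) :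
    |cov[X, Y; P]| ≤ √Var[X; P] * √Var[Y; P] := by
  rw [← Real.sqrt_mul (variance_nonneg X P)]
  exact Real.abs_le_sqrt (covariance_sq_le_variance_mul_variance hX hY)

lemma covariance_sub_smul_sub_smul_of_variance_eq_one (hU : MemLp U 2 P) (hV : MemLp V 2 P)
    (hW : MemLp W 2 P) (hU_var : Var[U; P] = 1) :
    cov[V - cov[U, V; P] • U, W - cov[U, W; P] • U; P] =
      cov[V, W; P] - cov[U, V; P] * cov[U, W; P] := by
  rw [covariance_sub_sub hV (hU.const_smul _) hW (hU.const_smul _)]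
  simp only [covariance_smul_left, covariance_smul_right, covariance_self hU.aemeasurable, hU_var,
    covariance_comm V U]
  ring

lemma variance_sub_smul_of_variance_eq_one (hU : MemLp U 2 P) (hV : MemLp V 2 P)
    (hU_var : Var[U; P] = 1) :
    Var[V - cov[U, V; P] • U; P] = Var[V; P] - cov[U, V; P] ^ 2 := by
  rw [← covariance_self (hV.sub (hU.const_smul _)).aemeasurable,
    covariance_sub_smul_sub_smul_of_variance_eq_one hU hV hV hU_var,
    covariance_self hV.aemeasurable, sq]

lemma abs_covariance_mul_covariance_sub_covariance_le_of_variance_eq_one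
    (hU : MemLp U 2 P) (hV : MemLp V 2 P) (hW : MemLp W 2 P) (hU_var : Var[U; P] = 1) :
    |cov[U, V; P] * cov[U, W; P] - cov[V, W; P]| ≤
      √(Var[V; P] - cov[U, V; P] ^ 2) * √(Var[W; P] - cov[U, W; P] ^ 2) := by
  rw [abs_sub_comm, ← covariance_sub_smul_sub_smul_of_variance_eq_one hU hV hW hU_var,
    ← variance_sub_smul_of_variance_eq_one hU hV hU_var,
    ← variance_sub_smul_of_variance_eq_one hU hW hU_var]
  exact abs_covariance_le_sqrt_variance_mul_sqrt_variance
    (hV.sub (hU.const_smul _)) (hW.sub (hU.const_smul _))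

end Covariance

section Correlation

variable {Ω : Type*} {mΩ : MeasurableSpace Ω}

/-- The Pearson correlation of two real random variables; it is `0` by the convention `x / 0 = 0`
when one of the variances vanishes. -/
noncomputable def correlation (X Y : Ω → ℝ) (P : Measure Ω) : ℝ :=
  cov[X, Y; P] / (√Var[X; P] * √Var[Y; P])

/-- The rescaling of a real random variable by its standard deviation, which turns correlations
into covariances. It is not centered, since covariances ignore additive constants. -/
noncomputable def unitVarianceRescaling (X : Ω → ℝ) (P : Measure Ω) : Ω → ℝ :=
  (√Var[X; P])⁻¹ • X

variable {P : Measure Ω} {U V W X X' Y Y' : Ω → ℝ}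

lemma memLp_unitVarianceRescaling {p : ENNReal} (hX : MemLp X p P) :
    MemLp (unitVarianceRescaling X P) p P :=
  hX.const_smul _

lemma variance_unitVarianceRescaling (hX_var : 0 < Var[X; P]) :
    Var[unitVarianceRescaling X P; P] = 1 := by
  rw [unitVarianceRescaling, variance_smul, inv_pow, Real.sq_sqrt hX_var.le,
    inv_mul_cancel₀ hX_var.ne']

lemma covariance_unitVarianceRescaling (X Y : Ω → ℝ) (P : Measure Ω) :
    cov[unitVarianceRescaling X P, unitVarianceRescaling Y P; P] = correlation X Y P := by
  rw [unitVarianceRescaling, unitVarianceRescaling, covariance_smul_left, covariance_smul_right,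
    correlation, div_eq_mul_inv, mul_inv]
  ring

lemma abs_correlation_mul_correlation_sub_correlation_le [IsFiniteMeasure P]
    (hU : MemLp U 2 P) (hV : MemLp V 2 P) (hW : MemLp W 2 P)
    (hU_var : 0 < Var[U; P]) (hV_var : 0 < Var[V; P]) (hW_var : 0 < Var[W; P]) :
    |correlation U V P * correlation U W P - correlation V W P| ≤
      √(1 - correlation U V P ^ 2) * √(1 - correlation U W P ^ 2) := by
  simpa only [covariance_unitVarianceRescaling, variance_unitVarianceRescaling hV_var,
      variance_unitVarianceRescaling hW_var] using
    abs_covariance_mul_covariance_sub_covariance_le_of_variance_eq_one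
      (memLp_unitVarianceRescaling hU) (memLp_unitVarianceRescaling hV)
      (memLp_unitVarianceRescaling hW) (variance_unitVarianceRescaling hU_var)

theorem abs_correlation_mul_sub_correlation_mul_le [IsFiniteMeasure P]
    (hX : MemLp X 2 P) (hX' : MemLp X' 2 P) (hY : MemLp Y 2 P) (hY' : MemLp Y' 2 P)
    (hX_var : 0 < Var[X; P]) (hX'_var : 0 < Var[X'; P])
    (hY_var : 0 < Var[Y; P]) (hY'_var : 0 < Var[Y'; P]) :
    |correlation X Y P * correlation X Y' P - correlation X' Y P * correlation X' Y' P| ≤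
      √(1 - correlation X Y P ^ 2) * √(1 - correlation X Y' P ^ 2) +
        √(1 - correlation X' Y P ^ 2) * √(1 - correlation X' Y' P ^ 2) := by
  calc
    _ ≤ |correlation X Y P * correlation X Y' P - correlation Y Y' P| +
          |correlation Y Y' P - correlation X' Y P * correlation X' Y' P| := abs_sub_le _ _ _
    _ ≤ _ := by
      rw [abs_sub_comm (correlation Y Y' P)]
      exact add_le_add
        (abs_correlation_mul_correlation_sub_correlation_le hX hY hY' hX_var hY_var hY'_var)
        (abs_correlation_mul_correlation_sub_correlation_le hX' hY hY' hX'_var hY_var hY'_var)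

end Correlation

section Law

variable {Ω 𝓧 : Type*} {mΩ : MeasurableSpace Ω} {m𝓧 : MeasurableSpace 𝓧} {P : Measure Ω}

lemma memLp_comp_of_hasLaw {E : Type*} [NormedAddCommGroup E] {p : ENNReal} {μ : Measure 𝓧}
    {Z : Ω → 𝓧} {F : 𝓧 → E} (hZ : HasLaw Z μ P) (hF : MemLp F p μ) : MemLp (F ∘ Z) p P :=
  (hZ.map_eq.symm ▸ hF).comp_of_map hZ.aemeasurable

lemma variance_comp_of_hasLaw {μ : Measure 𝓧} {Z : Ω → 𝓧} {F : 𝓧 → ℝ} (hZ : HasLaw Z μ P)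
    (hF : AEMeasurable F μ) : Var[F ∘ Z; P] = Var[F; μ] := by
  rw [← hZ.map_eq, variance_map (hZ.map_eq.symm ▸ hF) hZ.aemeasurable]

lemma correlation_comp_of_hasLaw {μ : Measure 𝓧} {Z : Ω → 𝓧} {F G : 𝓧 → ℝ} (hZ : HasLaw Z μ P)
    (hF : AEMeasurable F μ) (hG : AEMeasurable G μ) :
    correlation (F ∘ Z) (G ∘ Z) P = correlation F G μ := by
  rw [correlation, correlation, hZ.covariance_comp hF hG, variance_comp_of_hasLaw hZ hF,
    variance_comp_of_hasLaw hZ hG]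

lemma coordCorrelation_eq_correlation_fst_snd {μ : Measure (ℝ × ℝ)} [IsProbabilityMeasure μ]
    (hx : MemLp (fun q : ℝ × ℝ => q.1) 2 μ) (hy : MemLp (fun q : ℝ × ℝ => q.2) 2 μ) :
    coordCorrelation μ = correlation (fun q => q.1) (fun q => q.2) μ := by
  rw [correlation, covariance_eq_sub hx hy, variance_eq_sub hx, variance_eq_sub hy]
  rfl

lemma coordCorrelation_eq_correlation_of_hasLaw {μ : Measure (ℝ × ℝ)} [IsProbabilityMeasure μ]
    {X Y : Ω → ℝ} (hXY : HasLaw (fun ω => (X ω, Y ω)) μ P)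
    (hx : MemLp (fun q : ℝ × ℝ => q.1) 2 μ) (hy : MemLp (fun q : ℝ × ℝ => q.2) 2 μ) :
    coordCorrelation μ = correlation X Y P :=
  (coordCorrelation_eq_correlation_fst_snd hx hy).trans
    (correlation_comp_of_hasLaw hXY hx.aemeasurable hy.aemeasurable).symm

end Law

theorem cosphericity_test_necessity_general {Λ₁ Λ₂ Ω : Type*} [MeasurableSpace Ω]
    (μ : Λ₁ → Λ₂ → Measure (ℝ × ℝ)) [∀ i j, IsProbabilityMeasure (μ i j)]
    (hL2x : ∀ i j, MemLp (fun q : ℝ × ℝ => q.1) 2 (μ i j))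
    (hL2y : ∀ i j, MemLp (fun q : ℝ × ℝ => q.2) 2 (μ i j))
    (hvarx : ∀ i j, 0 < (∫ q, q.1 ^ 2 ∂μ i j) - (∫ q, q.1 ∂μ i j) ^ 2)
    (hvary : ∀ i j, 0 < (∫ q, q.2 ^ 2 ∂μ i j) - (∫ q, q.2 ∂μ i j) ^ 2)
    {P : Measure Ω} {f : Λ₁ → Ω → ℝ} {g : Λ₂ → Ω → ℝ}
    (hlaw : ∀ i j, HasLaw (fun ω => (f i ω, g j ω)) (μ i j) P) (i i' : Λ₁) (j j' : Λ₂) :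
    |coordCorrelation (μ i j) * coordCorrelation (μ i j') -
        coordCorrelation (μ i' j) * coordCorrelation (μ i' j')| ≤
      √(1 - coordCorrelation (μ i j) ^ 2) * √(1 - coordCorrelation (μ i j') ^ 2) +
        √(1 - coordCorrelation (μ i' j) ^ 2) * √(1 - coordCorrelation (μ i' j') ^ 2) := by
  have : IsProbabilityMeasure P := (hlaw i j).isProbabilityMeasure
  have hf (k : Λ₁) : MemLp (f k) 2 P := (memLp_comp_of_hasLaw (hlaw k j) (hL2x k j) :)
  have hg (l : Λ₂) : MemLp (g l) 2 P := (memLp_comp_of_hasLaw (hlaw i l) (hL2y i l) :)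
  have hf_var (k : Λ₁) : 0 < Var[f k; P] :=
    (hvarx k j).trans_eq <| (variance_eq_sub (hL2x k j)).symm.trans
      (variance_comp_of_hasLaw (hlaw k j) (hL2x k j).aemeasurable).symm
  have hg_var (l : Λ₂) : 0 < Var[g l; P] :=
    (hvary i l).trans_eq <| (variance_eq_sub (hL2y i l)).symm.trans
      (variance_comp_of_hasLaw (hlaw i l) (hL2y i l).aemeasurable).symm
  simp only [fun k l => coordCorrelation_eq_correlation_of_hasLaw (hlaw k l) (hL2x k l) (hL2y k l)]
  exact abs_correlation_mul_sub_correlation_mul_le (hf i) (hf i') (hg j) (hg j')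
    (hf_var i) (hf_var i') (hg_var j) (hg_var j')

/-- Cosphericity test, necessity. For two binary inputs with all four
treatments allowable and two real-valued outputs whose joint distributions `μ i j` have
square-integrable coordinates with strictly positive variances, if the family satisfies
selective influences then the correlations `ρ_{ij}` satisfy the cosphericity inequality
`|ρ₁₁ρ₁₂ − ρ₂₁ρ₂₂| ≤ √(1 − ρ₁₁²)√(1 − ρ₁₂²) + √(1 − ρ₂₁²)√(1 − ρ₂₂²)`. -/
theorem cosphericity_test_necessity
    (μ : Fin 2 → Fin 2 → Measure (ℝ × ℝ))
    (hprob : ∀ i j, IsProbabilityMeasure (μ i j))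
    (hL2x : ∀ i j, MemLp (fun q : ℝ × ℝ => q.1) 2 (μ i j))
    (hL2y : ∀ i j, MemLp (fun q : ℝ × ℝ => q.2) 2 (μ i j))
    (hvarx : ∀ i j, 0 < (∫ q, q.1 ^ 2 ∂μ i j) - (∫ q, q.1 ∂μ i j) ^ 2)
    (hvary : ∀ i j, 0 < (∫ q, q.2 ^ 2 ∂μ i j) - (∫ q, q.2 ∂μ i j) ^ 2)
    (hsel : ∃ (Ω : Type) (_ : MeasurableSpace Ω) (P : Measure Ω),
      IsProbabilityMeasure P ∧
      ∃ f g : Fin 2 → Ω → ℝ,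
        (∀ i, Measurable (f i)) ∧ (∀ j, Measurable (g j)) ∧
        ∀ i j, Measure.map (fun ω => (f i ω, g j ω)) P = μ i j) :
    |coordCorrelation (μ 0 0) * coordCorrelation (μ 0 1) -
        coordCorrelation (μ 1 0) * coordCorrelation (μ 1 1)| ≤
      Real.sqrt (1 - coordCorrelation (μ 0 0) ^ 2) *
          Real.sqrt (1 - coordCorrelation (μ 0 1) ^ 2) +
        Real.sqrt (1 - coordCorrelation (μ 1 0) ^ 2) *
          Real.sqrt (1 - coordCorrelation (μ 1 1) ^ 2) := by
  obtain ⟨Ω, _, P, _, f, g, hf, hg, hmap⟩ := hsel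
  exact cosphericity_test_necessity_general μ hL2x hL2y hvarx hvary
    (fun i j => ⟨((hf i).prodMk (hg j)).aemeasurable, hmap i j⟩) 0 1 0 1
end

section
/- (Geometric characterization of the cosphericity inequality.) Let ρ₁₁, ρ₁₂, ρ₂₁, ρ₂₂ be real numbers in [−1, 1]. Then |ρ₁₁ρ₁₂ − ρ₂₁ρ₂₂| ≤ √(1 − ρ₁₁²)·√(1 − ρ₁₂²) + √(1 − ρ₂₁²)·√(1 − ρ₂₂²) holds if and only if there exist unit vectors A₁, A₂, B₁, B₂ in three-dimensional Euclidean space ℝ³ such that ⟨A₁, B₁⟩ = ρ₁₁, ⟨A₁, B₂⟩ = ρ₁₂, ⟨A₂, B₁⟩ = ρ₂₁, and ⟨A₂, B₂⟩ = ρ₂₂, where ⟨·,·⟩ denotes the standard inner product. -/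
open scoped RealInnerProductSpace

/-!
The vectors `A` of norm one with `⟪A, B₁⟫ = a` and `⟪A, B₂⟫ = b` exist precisely when the Gram
matrix of `A, B₁, B₂` is positive semidefinite, which is the condition
`|⟪B₁, B₂⟫ - a * b| ≤ √(1 - a²) * √(1 - b²)`: the number `⟪B₁, B₂⟫` lies in a closed ball with
centre `a * b`. Since `A₁` and `A₂` may be chosen independently once `B₁` and `B₂` are fixed, the
configuration exists if and only if the ball of `A₁` meets the ball of `A₂`, that is, if and only
if the distance between their centres is at most the sum of their radii. The third dimension
provides a direction orthogonal to `B₁` and `B₂`. Over the complex numbers the centre becomes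
`conj a * b` and the argument is the same.
-/

open scoped InnerProductSpace ComplexConjugate

lemma one_sub_norm_sq_nonneg {E : Type*} [SeminormedAddGroup E] {x : E} (hx : ‖x‖ ≤ 1) :
    0 ≤ 1 - ‖x‖ ^ 2 :=
  sub_nonneg.2 (pow_le_one₀ (norm_nonneg x) hx)

section Scalars

variable {𝕜 : Type*} [RCLike 𝕜] {a b c : 𝕜}

-- Squared, both sides say that the Hermitian matrix with unit diagonal and entries `a, b, c` above
-- it has nonnegative determinant.
lemma norm_sub_conj_mul_le_sqrt_mul_sqrt_iff (ha : ‖a‖ ≤ 1) (hb : ‖b‖ ≤ 1) (hc : ‖c‖ ≤ 1) :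
    ‖c - conj a * b‖ ≤ √(1 - ‖a‖ ^ 2) * √(1 - ‖b‖ ^ 2) ↔
      ‖b - a * c‖ ≤ √(1 - ‖a‖ ^ 2) * √(1 - ‖c‖ ^ 2) := by
  have hab := mul_nonneg (one_sub_norm_sq_nonneg ha) (one_sub_norm_sq_nonneg hb)
  have hac := mul_nonneg (one_sub_norm_sq_nonneg ha) (one_sub_norm_sq_nonneg hc)
  have hre : RCLike.re ⟪c, conj a * b⟫_𝕜 = RCLike.re ⟪b, a * c⟫_𝕜 := by
    rw [← RCLike.conj_re, inner_conj_symm]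
    simp only [RCLike.inner_apply, map_mul, RCLike.conj_conj]
    ring_nf
  rw [← Real.sqrt_mul (one_sub_norm_sq_nonneg ha), ← Real.sqrt_mul (one_sub_norm_sq_nonneg ha),
    Real.le_sqrt (norm_nonneg _) hab, Real.le_sqrt (norm_nonneg _) hac,
    norm_sub_sq (𝕜 := 𝕜), norm_sub_sq (𝕜 := 𝕜), hre, norm_mul, norm_mul, RCLike.norm_conj]
  constructor <;> intro h <;> linarith

lemma mul_add_sqrt_one_sub_sq_mul_sqrt_one_sub_sq_le_one {x y : ℝ} (hx : |x| ≤ 1) (hy : |y| ≤ 1) :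
    x * y + √(1 - x ^ 2) * √(1 - y ^ 2) ≤ 1 := by
  have hx' : √(1 - x ^ 2) ^ 2 = 1 - x ^ 2 :=
    Real.sq_sqrt (sub_nonneg.2 ((sq_le_one_iff_abs_le_one x).2 hx))
  have hy' : √(1 - y ^ 2) ^ 2 = 1 - y ^ 2 :=
    Real.sq_sqrt (sub_nonneg.2 ((sq_le_one_iff_abs_le_one y).2 hy))
  linarith [two_mul_le_add_sq x y, two_mul_le_add_sq √(1 - x ^ 2) √(1 - y ^ 2)]

lemma norm_le_one_of_norm_sub_mul_le (ha : ‖a‖ ≤ 1) (hb : ‖b‖ ≤ 1)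
    (h : ‖c - a * b‖ ≤ √(1 - ‖a‖ ^ 2) * √(1 - ‖b‖ ^ 2)) : ‖c‖ ≤ 1 :=
  calc
    ‖c‖ ≤ ‖a * b‖ + ‖c - a * b‖ := norm_le_norm_add_norm_sub' c (a * b)
    _ ≤ ‖a‖ * ‖b‖ + √(1 - ‖a‖ ^ 2) * √(1 - ‖b‖ ^ 2) := by
      rw [norm_mul]
      gcongr
    _ ≤ 1 := mul_add_sqrt_one_sub_sq_mul_sqrt_one_sub_sq_le_one (by simpa) (by simpa)

end Scalars

lemma norm_sub_le_add_iff_exists {E : Type*} [SeminormedAddCommGroup E] [NormedSpace ℝ E]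
    {x y : E} {r s : ℝ} (hr : 0 ≤ r) (hs : 0 ≤ s) :
    ‖x - y‖ ≤ r + s ↔ ∃ z, ‖z - x‖ ≤ r ∧ ‖z - y‖ ≤ s := by
  simp only [← dist_eq_norm]
  refine ⟨fun h ↦ ?_, fun ⟨z, hx, hy⟩ ↦ (dist_triangle_left x y z).trans (add_le_add hx hy)⟩
  obtain ⟨z, hx, hy⟩ := exists_dist_le_le hr hs (h.trans_eq (add_comm r s))
  exact ⟨z, dist_comm x z ▸ hx, hy⟩

section SeminormedInnerProductSpace

variable {𝕜 E : Type*} [RCLike 𝕜] [SeminormedAddCommGroup E] [InnerProductSpace 𝕜 E]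

lemma inner_sub_inner_smul_eq_zero {e : E} (he : ‖e‖ = 1) (x : E) :
    ⟪e, x - ⟪e, x⟫_𝕜 • e⟫_𝕜 = 0 := by
  simp [inner_sub_right, inner_smul_right, inner_self_eq_norm_sq_to_K, he]

lemma inner_sub_inner_smul_sub_inner_smul {e : E} (he : ‖e‖ = 1) (x y : E) :
    ⟪x - ⟪e, x⟫_𝕜 • e, y - ⟪e, y⟫_𝕜 • e⟫_𝕜 = ⟪x, y⟫_𝕜 - ⟪x, e⟫_𝕜 * ⟪e, y⟫_𝕜 := by
  rw [inner_sub_left, inner_smul_left, inner_sub_inner_smul_eq_zero he, mul_zero, sub_zero,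
    inner_sub_right, inner_smul_right, mul_comm]

lemma norm_sub_inner_smul {e : E} (he : ‖e‖ = 1) (x : E) :
    ‖x - ⟪e, x⟫_𝕜 • e‖ = √(‖x‖ ^ 2 - ‖⟪e, x⟫_𝕜‖ ^ 2) := by
  rw [norm_eq_sqrt_re_inner (𝕜 := 𝕜), inner_sub_inner_smul_sub_inner_smul he, map_sub,
    inner_mul_symm_re_eq_norm, inner_self_eq_norm_sq, norm_mul, norm_inner_symm x e, ← sq]

lemma norm_inner_sub_inner_mul_inner_le {e : E} (he : ‖e‖ = 1) (x y : E) :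
    ‖⟪x, y⟫_𝕜 - ⟪x, e⟫_𝕜 * ⟪e, y⟫_𝕜‖ ≤
      √(‖x‖ ^ 2 - ‖⟪e, x⟫_𝕜‖ ^ 2) * √(‖y‖ ^ 2 - ‖⟪e, y⟫_𝕜‖ ^ 2) := by
  rw [← inner_sub_inner_smul_sub_inner_smul he, ← norm_sub_inner_smul he, ← norm_sub_inner_smul he]
  exact norm_inner_le_norm _ _

-- If `‖x‖ = 0`, then `hc` forces `c = 0`, and the coefficient chosen here is `0 / 0 = 0`.
lemma exists_norm_smul_le_inner_smul_eq {x : E} {c : 𝕜} {r : ℝ} (hr : 0 ≤ r) (hc : ‖c‖ ≤ r * ‖x‖) :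
    ∃ z : 𝕜, ‖z • x‖ ≤ r ∧ ⟪z • x, x⟫_𝕜 = c := by
  refine ⟨conj c / (‖x‖ : 𝕜) ^ 2, ?_, ?_⟩
  · calc
      ‖(conj c / (‖x‖ : 𝕜) ^ 2) • x‖ = ‖c‖ / ‖x‖ := by
        rw [norm_smul, norm_div, norm_pow, RCLike.norm_conj, RCLike.norm_ofReal, abs_norm]
        field_simp
      _ ≤ r := div_le_of_le_mul₀ (norm_nonneg x) hr hc
  · rw [inner_smul_left, inner_self_eq_norm_sq_to_K]
    rcases eq_or_ne ‖x‖ 0 with hx | hx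
    · have hc0 : c = 0 := by simpa [hx] using hc
      simp [hc0]
    · have hx' : (‖x‖ : 𝕜) ≠ 0 := RCLike.ofReal_ne_zero.2 hx
      simp [hx']

lemma exists_norm_le_one_inner_eq_inner_eq {x : E} (hx : ‖x‖ = 1) (y : E) {a b : 𝕜} (ha : ‖a‖ ≤ 1)
    (h : ‖b - a * ⟪x, y⟫_𝕜‖ ≤ √(1 - ‖a‖ ^ 2) * √(‖y‖ ^ 2 - ‖⟪x, y⟫_𝕜‖ ^ 2)) :
    ∃ p : E, ‖p‖ ≤ 1 ∧ ⟪p, x⟫_𝕜 = a ∧ ⟪p, y⟫_𝕜 = b := by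
  set y' := y - ⟪x, y⟫_𝕜 • x with hy'
  have hxx : ⟪x, x⟫_𝕜 = 1 := by simp [inner_self_eq_norm_sq_to_K, hx]
  have hxy' : ⟪x, y'⟫_𝕜 = 0 := inner_sub_inner_smul_eq_zero hx y
  rw [← norm_sub_inner_smul hx, ← hy'] at h
  obtain ⟨z, hz, hzy'⟩ := exists_norm_smul_le_inner_smul_eq (Real.sqrt_nonneg _) h
  have hzx : ⟪z • y', x⟫_𝕜 = 0 := by rw [inner_smul_left, inner_eq_zero_symm.1 hxy', mul_zero]
  have hpx : ⟪conj a • x + z • y', x⟫_𝕜 = a := by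
    rw [inner_add_left, inner_smul_left, hxx, hzx, RCLike.conj_conj, mul_one, add_zero]
  have hpy' : ⟪conj a • x + z • y', y'⟫_𝕜 = b - a * ⟪x, y⟫_𝕜 := by
    rw [inner_add_left, inner_smul_left, hxy', mul_zero, zero_add, hzy']
  refine ⟨conj a • x + z • y', ?_, hpx, ?_⟩
  · have hnorm := norm_add_sq_eq_norm_sq_add_norm_sq_of_inner_eq_zero (𝕜 := 𝕜) (conj a • x) (z • y')
      (by rw [inner_smul_left, inner_smul_right, hxy', mul_zero, mul_zero])
    have hz2 : ‖z • y'‖ ^ 2 ≤ 1 - ‖a‖ ^ 2 :=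
      (Real.le_sqrt (norm_nonneg _) (one_sub_norm_sq_nonneg ha)).1 hz
    rw [norm_smul, RCLike.norm_conj, hx, mul_one] at hnorm
    exact (sq_le_one_iff₀ (norm_nonneg _)).1 (by linarith)
  · rw [hy', inner_sub_right, inner_smul_right, hpx, mul_comm] at hpy'
    exact sub_left_injective hpy'

end SeminormedInnerProductSpace

section InnerProductSpace

variable {𝕜 E : Type*} [RCLike 𝕜] [NormedAddCommGroup E] [InnerProductSpace 𝕜 E]

lemma exists_norm_eq_one_mem_orthogonal {K : Submodule 𝕜 E} [K.HasOrthogonalProjection]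
    (hK : K ≠ ⊤) : ∃ n ∈ Kᗮ, ‖n‖ = 1 := by
  obtain ⟨x, hx, hx0⟩ := Kᗮ.exists_mem_ne_zero_of_ne_bot (mt Submodule.orthogonal_eq_bot_iff.1 hK)
  exact ⟨_, Kᗮ.smul_mem _ hx, norm_smul_inv_norm (𝕜 := 𝕜) hx0⟩

-- Project `p` to `K`, then add a vector orthogonal to `K` to bring the norm up to one.
lemma exists_norm_eq_one_forall_mem_inner_eq {K : Submodule 𝕜 E} [K.HasOrthogonalProjection]
    (hK : K ≠ ⊤) {p : E} (hp : ‖p‖ ≤ 1) : ∃ w : E, ‖w‖ = 1 ∧ ∀ x ∈ K, ⟪w, x⟫_𝕜 = ⟪p, x⟫_𝕜 := by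
  obtain ⟨n, hn, hn1⟩ := exists_norm_eq_one_mem_orthogonal hK
  set q := K.starProjection p with hq
  set t : ℝ := √(1 - ‖q‖ ^ 2)
  have hq1 : ‖q‖ ≤ 1 := (K.norm_starProjection_apply_le p).trans hp
  have ht2 : t ^ 2 = 1 - ‖q‖ ^ 2 := Real.sq_sqrt (one_sub_norm_sq_nonneg hq1)
  refine ⟨q + (t : 𝕜) • n, ?_, fun x hx ↦ ?_⟩
  · have hqn : ⟪q, (t : 𝕜) • n⟫_𝕜 = 0 :=
      K.inner_right_of_mem_orthogonal (K.starProjection_apply_mem p) (Kᗮ.smul_mem _ hn)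
    have h := norm_add_sq_eq_norm_sq_add_norm_sq_of_inner_eq_zero q _ hqn
    rw [← sq_eq_sq₀ (norm_nonneg _) zero_le_one, sq, h, norm_smul, hn1]
    simp [← sq, ht2]
  · rw [inner_add_left, inner_smul_left, K.inner_left_of_mem_orthogonal hx hn, mul_zero, add_zero,
      hq, K.inner_starProjection_left_eq_right, K.starProjection_eq_self_iff.2 hx]

lemma exists_norm_eq_one_forall_mem_finset_inner_eq {s : Finset E}
    (hs : s.card < Module.rank 𝕜 E) {p : E} (hp : ‖p‖ ≤ 1) :
    ∃ w : E, ‖w‖ = 1 ∧ ∀ x ∈ s, ⟪w, x⟫_𝕜 = ⟪p, x⟫_𝕜 := by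
  have hK : Submodule.span 𝕜 (s : Set E) ≠ ⊤ := fun h ↦
    (rank_span_finset_le s).not_gt (by rwa [h, rank_top])
  obtain ⟨w, hw, hwp⟩ := exists_norm_eq_one_forall_mem_inner_eq hK hp
  exact ⟨w, hw, fun x hx ↦ hwp x (Submodule.subset_span hx)⟩

lemma exists_norm_eq_one_norm_eq_one_inner_eq (hE : 2 ≤ Module.rank 𝕜 E) {c : 𝕜} (hc : ‖c‖ ≤ 1) :
    ∃ x y : E, ‖x‖ = 1 ∧ ‖y‖ = 1 ∧ ⟪x, y⟫_𝕜 = c := by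
  have hE1 : 1 < Module.rank 𝕜 E := Cardinal.one_lt_two.trans_le hE
  obtain ⟨y, hy, -⟩ := exists_norm_eq_one_forall_mem_finset_inner_eq (𝕜 := 𝕜) (s := (∅ : Finset E))
    (p := 0) (by simpa using zero_lt_one.trans hE1) (by simp)
  obtain ⟨x, hx, hxy⟩ := exists_norm_eq_one_forall_mem_finset_inner_eq (𝕜 := 𝕜) (s := {y})
    (p := conj c • y) (by simpa using hE1) (by simpa [norm_smul, hy])
  refine ⟨x, y, hx, hy, ?_⟩
  rw [hxy y (Finset.mem_singleton_self y), inner_smul_left, inner_self_eq_norm_sq_to_K, hy]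
  simp

lemma exists_norm_eq_one_inner_eq_inner_eq_iff (hE : 3 ≤ Module.rank 𝕜 E) {x y : E} (hx : ‖x‖ = 1)
    (hy : ‖y‖ = 1) {a b : 𝕜} (ha : ‖a‖ ≤ 1) (hb : ‖b‖ ≤ 1) :
    (∃ w : E, ‖w‖ = 1 ∧ ⟪w, x⟫_𝕜 = a ∧ ⟪w, y⟫_𝕜 = b) ↔
      ‖⟪x, y⟫_𝕜 - conj a * b‖ ≤ √(1 - ‖a‖ ^ 2) * √(1 - ‖b‖ ^ 2) := by
  constructor
  · rintro ⟨w, hw, rfl, rfl⟩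
    simpa only [inner_conj_symm, hx, hy, one_pow] using norm_inner_sub_inner_mul_inner_le hw x y
  · intro h
    have hxy : ‖⟪x, y⟫_𝕜‖ ≤ 1 := by simpa [hx, hy] using norm_inner_le_norm (𝕜 := 𝕜) x y
    obtain ⟨p, hp, hpx, hpy⟩ := exists_norm_le_one_inner_eq_inner_eq hx y ha
      (by simpa only [hy, one_pow] using (norm_sub_conj_mul_le_sqrt_mul_sqrt_iff ha hb hxy).1 h)
    classical
    have hcard : (({x, y} : Finset E).card : Cardinal) < Module.rank 𝕜 E :=
      (Nat.cast_lt.2 (Finset.card_le_two.trans_lt (Nat.lt_succ_self 2))).trans_le hE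
    obtain ⟨w, hw, hwp⟩ := exists_norm_eq_one_forall_mem_finset_inner_eq hcard hp
    exact ⟨w, hw, (hwp x (by simp)).trans hpx, (hwp y (by simp)).trans hpy⟩

theorem cosphericity_iff_unit_vectors_general (hE : 3 ≤ Module.rank 𝕜 E) {ρ₁₁ ρ₁₂ ρ₂₁ ρ₂₂ : 𝕜}
    (h₁₁ : ‖ρ₁₁‖ ≤ 1) (h₁₂ : ‖ρ₁₂‖ ≤ 1) (h₂₁ : ‖ρ₂₁‖ ≤ 1) (h₂₂ : ‖ρ₂₂‖ ≤ 1) :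
    ‖conj ρ₁₁ * ρ₁₂ - conj ρ₂₁ * ρ₂₂‖ ≤
        √(1 - ‖ρ₁₁‖ ^ 2) * √(1 - ‖ρ₁₂‖ ^ 2) + √(1 - ‖ρ₂₁‖ ^ 2) * √(1 - ‖ρ₂₂‖ ^ 2) ↔
      ∃ A₁ A₂ B₁ B₂ : E, ‖A₁‖ = 1 ∧ ‖A₂‖ = 1 ∧ ‖B₁‖ = 1 ∧ ‖B₂‖ = 1 ∧
        ⟪A₁, B₁⟫_𝕜 = ρ₁₁ ∧ ⟪A₁, B₂⟫_𝕜 = ρ₁₂ ∧ ⟪A₂, B₁⟫_𝕜 = ρ₂₁ ∧ ⟪A₂, B₂⟫_𝕜 = ρ₂₂ := by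
  rw [norm_sub_le_add_iff_exists (by positivity) (by positivity)]
  constructor
  · rintro ⟨c, hc₁, hc₂⟩
    have hc : ‖c‖ ≤ 1 := norm_le_one_of_norm_sub_mul_le (a := conj ρ₁₁) (by simpa) h₁₂ (by simpa)
    obtain ⟨B₁, B₂, hB₁, hB₂, rfl⟩ :=
      exists_norm_eq_one_norm_eq_one_inner_eq (le_trans (by norm_num) hE) hc
    obtain ⟨A₁, hA₁, h₁, h₂⟩ :=
      (exists_norm_eq_one_inner_eq_inner_eq_iff hE hB₁ hB₂ h₁₁ h₁₂).2 hc₁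
    obtain ⟨A₂, hA₂, h₃, h₄⟩ :=
      (exists_norm_eq_one_inner_eq_inner_eq_iff hE hB₁ hB₂ h₂₁ h₂₂).2 hc₂
    exact ⟨A₁, A₂, B₁, B₂, hA₁, hA₂, hB₁, hB₂, h₁, h₂, h₃, h₄⟩
  · rintro ⟨A₁, A₂, B₁, B₂, hA₁, hA₂, hB₁, hB₂, h₁, h₂, h₃, h₄⟩
    exact ⟨⟪B₁, B₂⟫_𝕜,
      (exists_norm_eq_one_inner_eq_inner_eq_iff hE hB₁ hB₂ h₁₁ h₁₂).1 ⟨A₁, hA₁, h₁, h₂⟩,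
      (exists_norm_eq_one_inner_eq_inner_eq_iff hE hB₁ hB₂ h₂₁ h₂₂).1 ⟨A₂, hA₂, h₃, h₄⟩⟩

end InnerProductSpace

/-- Geometric characterization of the cosphericity inequality.
For reals `ρ₁₁, ρ₁₂, ρ₂₁, ρ₂₂ ∈ [−1,1]`, the cosphericity inequality
`|ρ₁₁ρ₁₂ − ρ₂₁ρ₂₂| ≤ √(1 − ρ₁₁²)√(1 − ρ₁₂²) + √(1 − ρ₂₁²)√(1 − ρ₂₂²)` holds if and
only if there exist unit vectors `A₁, A₂, B₁, B₂` in three-dimensional Euclidean space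
whose pairwise inner products realize the given numbers:
`⟪A₁,B₁⟫ = ρ₁₁`, `⟪A₁,B₂⟫ = ρ₁₂`, `⟪A₂,B₁⟫ = ρ₂₁`, `⟪A₂,B₂⟫ = ρ₂₂`. -/
theorem cosphericity_iff_unit_vectors
    (ρ₁₁ ρ₁₂ ρ₂₁ ρ₂₂ : ℝ)
    (h₁₁ : ρ₁₁ ∈ Set.Icc (-1 : ℝ) 1) (h₁₂ : ρ₁₂ ∈ Set.Icc (-1 : ℝ) 1)
    (h₂₁ : ρ₂₁ ∈ Set.Icc (-1 : ℝ) 1) (h₂₂ : ρ₂₂ ∈ Set.Icc (-1 : ℝ) 1) :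
    (|ρ₁₁ * ρ₁₂ - ρ₂₁ * ρ₂₂| ≤
        Real.sqrt (1 - ρ₁₁ ^ 2) * Real.sqrt (1 - ρ₁₂ ^ 2) +
          Real.sqrt (1 - ρ₂₁ ^ 2) * Real.sqrt (1 - ρ₂₂ ^ 2))
    ↔
    ∃ A₁ A₂ B₁ B₂ : EuclideanSpace ℝ (Fin 3),
      ‖A₁‖ = 1 ∧ ‖A₂‖ = 1 ∧ ‖B₁‖ = 1 ∧ ‖B₂‖ = 1 ∧
      ⟪A₁, B₁⟫ = ρ₁₁ ∧ ⟪A₁, B₂⟫ = ρ₁₂ ∧ ⟪A₂, B₁⟫ = ρ₂₁ ∧ ⟪A₂, B₂⟫ = ρ₂₂ := by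
  have hE : 3 ≤ Module.rank ℝ (EuclideanSpace ℝ (Fin 3)) := by simp [← Module.finrank_eq_rank]
  simpa using cosphericity_iff_unit_vectors_general hE (abs_le.2 h₁₁) (abs_le.2 h₁₂) (abs_le.2 h₂₁)
    (abs_le.2 h₂₂)
end

section
/- (Interaction contrast for the parallel-OR (minimum) architecture.) Let (Ω, 𝔉, P) be a probability space and let A₁, A₂, B₁, B₂ : Ω → ℝ be measurable functions satisfying the prolongation constraints A₁(ω) ≤ A₂(ω) and B₁(ω) ≤ B₂(ω) for every ω ∈ Ω. Define T_{ij} = min(A_i, B_j) for i, j ∈ {1,2}. Then for every real t, P(T₁₁ ≤ t) + P(T₂₂ ≤ t) − P(T₁₂ ≤ t) − P(T₂₁ ≤ t) ≤ 0. -/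
open MeasureTheory

universe u

/-!
Writing `aᵢ = {Aᵢ ≤ t}` and `bⱼ = {Bⱼ ≤ t}`, the event `Tᵢⱼ ≤ t` is `aᵢ ∪ bⱼ`. Prolongation gives
`a₂ ⊆ a₁` and `b₂ ⊆ b₁`, so the two mixed events `a₁ ∪ b₂` and `a₂ ∪ b₁` have union `a₁ ∪ b₁` and
an intersection containing `a₂ ∪ b₂`; the inequality is then submodularity of the measure.
-/

section

variable {Ω : Type*} [MeasurableSpace Ω] (μ : Measure Ω)

theorem measure_union_add_inter_le (s t : Set Ω) : μ (s ∪ t) + μ (s ∩ t) ≤ μ s + μ t :=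
  calc
    μ (s ∪ t) + μ (s ∩ t) ≤ μ (s ∪ toMeasurable μ t) + μ (s ∩ toMeasurable μ t) := by
      gcongr <;> exact subset_toMeasurable μ t
    _ = μ s + μ (toMeasurable μ t) := measure_union_add_inter s (measurableSet_toMeasurable μ t)
    _ = μ s + μ t := by rw [measure_toMeasurable]

variable {μ}

theorem measure_union_add_union_le_of_ae_le {a₁ a₂ b₁ b₂ : Set Ω}
    (ha : a₂ ≤ᵐ[μ] a₁) (hb : b₂ ≤ᵐ[μ] b₁) :
    μ (a₁ ∪ b₁) + μ (a₂ ∪ b₂) ≤ μ (a₁ ∪ b₂) + μ (a₂ ∪ b₁) := by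
  have h_union : a₁ ∪ b₁ ⊆ (a₁ ∪ b₂) ∪ (a₂ ∪ b₁) :=
    Set.union_subset_union Set.subset_union_left Set.subset_union_right
  have h_inter : (a₂ ∪ b₂ : Set Ω) ≤ᵐ[μ] ((a₁ ∪ b₂) ∩ (a₂ ∪ b₁) : Set Ω) := by
    filter_upwards [ha, hb] with ω hωa hωb hω
    exact ⟨hω.imp_left hωa, hω.imp_right hωb⟩
  calc
    μ (a₁ ∪ b₁) + μ (a₂ ∪ b₂) ≤ μ ((a₁ ∪ b₂) ∪ (a₂ ∪ b₁)) + μ ((a₁ ∪ b₂) ∩ (a₂ ∪ b₁)) :=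
      add_le_add (measure_mono h_union) (measure_mono_ae h_inter)
    _ ≤ μ (a₁ ∪ b₂) + μ (a₂ ∪ b₁) := measure_union_add_inter_le μ _ _

theorem interaction_contrast_parallel_or_general {α : Type*} [LinearOrder α]
    {A₁ A₂ B₁ B₂ : Ω → α} (hA : A₁ ≤ᵐ[μ] A₂) (hB : B₁ ≤ᵐ[μ] B₂) (t : α) :
    μ {ω | min (A₁ ω) (B₁ ω) ≤ t} + μ {ω | min (A₂ ω) (B₂ ω) ≤ t} ≤
      μ {ω | min (A₁ ω) (B₂ ω) ≤ t} + μ {ω | min (A₂ ω) (B₁ ω) ≤ t} := by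
  simp only [min_le_iff, Set.ofPred_or]
  exact measure_union_add_union_le_of_ae_le (hA.mono fun _ ↦ le_trans) (hB.mono fun _ ↦ le_trans)

end

/-- Interaction contrast for the parallel-OR (minimum) architecture.
If the process durations `A₁, A₂, B₁, B₂` on a common probability space satisfy the
prolongation constraints `A₁ ≤ A₂` and `B₁ ≤ B₂` pointwise, and the response times are
`T_{ij} = min(A_i, B_j)`, then the interaction contrast
`c(t) = P(T₁₁ ≤ t) + P(T₂₂ ≤ t) − P(T₁₂ ≤ t) − P(T₂₁ ≤ t)` is nonpositive for every
real `t`. -/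
theorem interaction_contrast_parallel_or
    {Ω : Type u} [MeasurableSpace Ω] (P : Measure Ω) [IsProbabilityMeasure P]
    (A₁ A₂ B₁ B₂ : Ω → ℝ)
    (hA₁ : Measurable A₁) (hA₂ : Measurable A₂)
    (hB₁ : Measurable B₁) (hB₂ : Measurable B₂)
    (hA : ∀ ω, A₁ ω ≤ A₂ ω) (hB : ∀ ω, B₁ ω ≤ B₂ ω) (t : ℝ) :
    (P {ω | min (A₁ ω) (B₁ ω) ≤ t}).toReal + (P {ω | min (A₂ ω) (B₂ ω) ≤ t}).toReal -
        (P {ω | min (A₁ ω) (B₂ ω) ≤ t}).toReal -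
        (P {ω | min (A₂ ω) (B₁ ω) ≤ t}).toReal ≤ 0 := by
  rw [sub_sub, sub_nonpos, ← ENNReal.toReal_add (measure_ne_top P _) (measure_ne_top P _),
    ← ENNReal.toReal_add (measure_ne_top P _) (measure_ne_top P _)]
  exact ENNReal.toReal_mono (by finiteness)
    (interaction_contrast_parallel_or_general (.of_forall hA) (.of_forall hB) t)
end

section
/- (Interaction contrast for the parallel-AND (maximum) architecture.) Let (Ω, 𝔉, P) be a probability space and let A₁, A₂, B₁, B₂ : Ω → ℝ be measurable functions satisfying the prolongation constraints A₁(ω) ≤ A₂(ω) and B₁(ω) ≤ B₂(ω) for every ω ∈ Ω. Define T_{ij} = max(A_i, B_j) for i, j ∈ {1,2}. Then for every real t, P(T₁₁ ≤ t) + P(T₂₂ ≤ t) − P(T₁₂ ≤ t) − P(T₂₁ ≤ t) ≥ 0. -/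
open MeasureTheory

universe u

/-!
Since `T_{ij} ≤ t` exactly when `A_i ≤ t` and `B_j ≤ t`, splitting along `{A₂ ≤ t}` gives
`P(T₁ⱼ ≤ t) − P(T₂ⱼ ≤ t) = P(A₁ ≤ t, A₂ > t, Bⱼ ≤ t)`. The interaction contrast is the value of the
right-hand side at `j = 1` minus its value at `j = 2`, and `{B₂ ≤ t} ⊆ {B₁ ≤ t}`.
-/

section

variable {Ω : Type*} [MeasurableSpace Ω] {μ : Measure Ω}

theorem measure_inter_add_measure_inter_le {s s' t t' : Set Ω} (hs : NullMeasurableSet s μ)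
    (hss' : s ≤ᵐ[μ] s') (htt' : t ≤ᵐ[μ] t') :
    μ (s' ∩ t) + μ (s ∩ t') ≤ μ (s' ∩ t') + μ (s ∩ t) := by
  have measure_split (u : Set Ω) : μ (s ∩ u) + μ ((s' \ s) ∩ u) = μ (s' ∩ u) := by
    have inter_ae_eq : (s' ∩ u ∩ s : Set Ω) =ᵐ[μ] (s ∩ u : Set Ω) := by
      filter_upwards [hss'] with ω hω
      exact propext ⟨fun h ↦ ⟨h.2, h.1.2⟩, fun h ↦ ⟨⟨hω h.1, h.2⟩, h.1⟩⟩
    rw [← measure_inter_add_sdiff₀ (s' ∩ u) hs, measure_congr inter_ae_eq,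
      Set.inter_sdiff_right_comm]
  calc μ (s' ∩ t) + μ (s ∩ t')
      = μ (s ∩ t) + μ ((s' \ s) ∩ t) + μ (s ∩ t') := by rw [measure_split t]
    _ ≤ μ (s ∩ t) + μ ((s' \ s) ∩ t') + μ (s ∩ t') := by
        gcongr μ (s ∩ t) + ?_ + μ (s ∩ t')
        exact measure_mono_ae ((Filter.EventuallyLE.refl _ _).inter htt')
    _ = μ (s ∩ t') + μ ((s' \ s) ∩ t') + μ (s ∩ t) := by ring
    _ = μ (s' ∩ t') + μ (s ∩ t) := by rw [measure_split t']

theorem interaction_contrast_parallel_and_general {α : Type*} [SemilatticeSup α]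
    {A₁ A₂ B₁ B₂ : Ω → α} {t : α}
    (hA₂ : NullMeasurableSet {ω | A₂ ω ≤ t} μ) (hA : A₁ ≤ᵐ[μ] A₂) (hB : B₁ ≤ᵐ[μ] B₂) :
    μ {ω | A₁ ω ⊔ B₂ ω ≤ t} + μ {ω | A₂ ω ⊔ B₁ ω ≤ t} ≤
      μ {ω | A₁ ω ⊔ B₁ ω ≤ t} + μ {ω | A₂ ω ⊔ B₂ ω ≤ t} := by
  simp only [sup_le_iff, Set.ofPred_and]
  exact measure_inter_add_measure_inter_le hA₂ (hA.mono fun _ h ↦ h.trans)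
    (hB.mono fun _ h ↦ h.trans)

end

/-- Interaction contrast for the parallel-AND (maximum) architecture.
If the process durations `A₁, A₂, B₁, B₂` on a common probability space satisfy the
prolongation constraints `A₁ ≤ A₂` and `B₁ ≤ B₂` pointwise, and the response times are
`T_{ij} = max(A_i, B_j)`, then the interaction contrast
`c(t) = P(T₁₁ ≤ t) + P(T₂₂ ≤ t) − P(T₁₂ ≤ t) − P(T₂₁ ≤ t)` is nonnegative for every
real `t`. -/
theorem interaction_contrast_parallel_and
    {Ω : Type u} [MeasurableSpace Ω] (P : Measure Ω) [IsProbabilityMeasure P]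
    (A₁ A₂ B₁ B₂ : Ω → ℝ)
    (hA₁ : Measurable A₁) (hA₂ : Measurable A₂)
    (hB₁ : Measurable B₁) (hB₂ : Measurable B₂)
    (hA : ∀ ω, A₁ ω ≤ A₂ ω) (hB : ∀ ω, B₁ ω ≤ B₂ ω) (t : ℝ) :
    0 ≤ (P {ω | max (A₁ ω) (B₁ ω) ≤ t}).toReal + (P {ω | max (A₂ ω) (B₂ ω) ≤ t}).toReal -
        (P {ω | max (A₁ ω) (B₂ ω) ≤ t}).toReal -
        (P {ω | max (A₂ ω) (B₁ ω) ≤ t}).toReal := by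
  rw [sub_sub, sub_nonneg, ← ENNReal.toReal_add (by finiteness) (by finiteness),
    ← ENNReal.toReal_add (by finiteness) (by finiteness)]
  exact ENNReal.toReal_mono (by finiteness) <| interaction_contrast_parallel_and_general
    (measurableSet_le hA₂ measurable_const).nullMeasurableSet (.of_forall hA) (.of_forall hB)
end

section
/- (Interaction contrast for the serial architecture.) Let (Ω, 𝔉, P) be a probability space and let A₁, A₂, B₁, B₂ : Ω → ℝ be nonnegative, integrable, measurable functions satisfying the prolongation constraints A₁(ω) ≤ A₂(ω) and B₁(ω) ≤ B₂(ω) for every ω ∈ Ω. Define T_{ij} = A_i + B_j for i, j ∈ {1,2}, and let c(s) = P(T₁₁ ≤ s) + P(T₂₂ ≤ s) − P(T₁₂ ≤ s) − P(T₂₁ ≤ s). Then: (i) for every t ≥ 0, ∫₀ᵗ c(s) ds ≥ 0; and (ii) ∫₀^∞ c(s) ds = 0. -/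
open MeasureTheory

universe u

/-- The interaction contrast at time `s` for the serial architecture
`T_{ij} = A_i + B_j`:
`c(s) = P(T₁₁ ≤ s) + P(T₂₂ ≤ s) − P(T₁₂ ≤ s) − P(T₂₁ ≤ s)`. -/
noncomputable def serialInteractionContrast
    {Ω : Type u} [MeasurableSpace Ω] (P : Measure Ω)
    (A₁ A₂ B₁ B₂ : Ω → ℝ) (s : ℝ) : ℝ :=
  (P {ω | A₁ ω + B₁ ω ≤ s}).toReal + (P {ω | A₂ ω + B₂ ω ≤ s}).toReal -
    (P {ω | A₁ ω + B₂ ω ≤ s}).toReal - (P {ω | A₂ ω + B₁ ω ≤ s}).toReal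

/-!
Grouping the contrast as `c(s) = P(T₁₁ ≤ s < T₁₂) - P(T₂₁ ≤ s < T₂₂)` and applying Tonelli, its
integral over a set `S` of times is the expected length of `[T₁₁, T₁₂) ∩ S` minus that of
`[T₂₁, T₂₂) ∩ S`. Both intervals have length `B₂ - B₁`, so the difference vanishes when `S`
contains all nonnegative times. The second interval is the first one shifted to the right by
`A₂ - A₁`, so for `S = (0, t]` less of it survives and the difference is nonnegative.
-/

open Set
open scoped ENNReal

section MeasureMemIco

variable {Ω : Type*} [MeasurableSpace Ω] {P : Measure Ω} {X Y : Ω → ℝ} {ν : Measure ℝ}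

lemma aemeasurable_indicator_setOf_mem_Ico (hX : AEMeasurable X P) (hY : AEMeasurable Y P) :
    AEMeasurable ({p : Ω × ℝ | p.2 ∈ Ico (X p.1) (Y p.1)}.indicator (1 : Ω × ℝ → ℝ≥0∞))
      (P.prod ν) :=
  aemeasurable_one.indicator₀
    ((nullMeasurableSet_le hX.comp_fst measurable_snd.aemeasurable).inter
      (nullMeasurableSet_lt measurable_snd.aemeasurable hY.comp_fst))

lemma lintegral_indicator_setOf_mem_Ico (hX : AEMeasurable X P) (hY : AEMeasurable Y P) (s : ℝ) :
    ∫⁻ ω, {p : Ω × ℝ | p.2 ∈ Ico (X p.1) (Y p.1)}.indicator 1 (ω, s) ∂P =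
      P {ω | s ∈ Ico (X ω) (Y ω)} :=
  lintegral_indicator_one₀ <|
    (nullMeasurableSet_le hX aemeasurable_const).inter (nullMeasurableSet_lt aemeasurable_const hY)

lemma aemeasurable_measure_mem_Ico [SFinite P] [SFinite ν]
    (hX : AEMeasurable X P) (hY : AEMeasurable Y P) :
    AEMeasurable (fun s ↦ P {ω | s ∈ Ico (X ω) (Y ω)}) ν := by
  simp_rw [← lintegral_indicator_setOf_mem_Ico hX hY]
  exact (aemeasurable_indicator_setOf_mem_Ico hX hY).lintegral_prod_left'

lemma lintegral_measure_mem_Ico [SFinite P] [SFinite ν]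
    (hX : AEMeasurable X P) (hY : AEMeasurable Y P) :
    ∫⁻ s, P {ω | s ∈ Ico (X ω) (Y ω)} ∂ν = ∫⁻ ω, ν (Ico (X ω) (Y ω)) ∂P := by
  let χ : Ω → ℝ → ℝ≥0∞ := fun ω s ↦
    {p : Ω × ℝ | p.2 ∈ Ico (X p.1) (Y p.1)}.indicator 1 (ω, s)
  simp_rw [← lintegral_indicator_setOf_mem_Ico hX hY]
  rw [← lintegral_lintegral_swap (f := χ) (aemeasurable_indicator_setOf_mem_Ico hX hY)]
  exact lintegral_congr fun ω ↦ lintegral_indicator_one (s := Ico (X ω) (Y ω)) measurableSet_Ico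

lemma lintegral_measure_Ico_ne_top [IsFiniteMeasure P] [IsFiniteMeasure ν] :
    ∫⁻ ω, ν (Ico (X ω) (Y ω)) ∂P ≠ ∞ :=
  ((lintegral_mono fun _ ↦ measure_mono (subset_univ _)).trans_lt
    (lintegral_const_lt_top (μ := P) (measure_ne_top ν univ))).ne

lemma integrable_measureReal_mem_Ico [SFinite P] [SFinite ν]
    (hX : AEMeasurable X P) (hY : AEMeasurable Y P)
    (hfin : ∫⁻ ω, ν (Ico (X ω) (Y ω)) ∂P ≠ ∞) :
    Integrable (fun s ↦ P.real {ω | s ∈ Ico (X ω) (Y ω)}) ν := by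
  rw [← lintegral_measure_mem_Ico hX hY] at hfin
  exact integrable_toReal_of_lintegral_ne_top (aemeasurable_measure_mem_Ico hX hY) hfin

lemma integral_measureReal_mem_Ico [IsFiniteMeasure P] [SFinite ν]
    (hX : AEMeasurable X P) (hY : AEMeasurable Y P) :
    ∫ s, P.real {ω | s ∈ Ico (X ω) (Y ω)} ∂ν = (∫⁻ ω, ν (Ico (X ω) (Y ω)) ∂P).toReal := by
  rw [← lintegral_measure_mem_Ico hX hY]
  exact integral_toReal (aemeasurable_measure_mem_Ico hX hY)
    (ae_of_all ν fun _ ↦ measure_lt_top P _)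

lemma measureReal_le_sub_measureReal_le [IsFiniteMeasure P]
    (hY : AEMeasurable Y P) (hXY : X ≤ᵐ[P] Y) (s : ℝ) :
    P.real {ω | X ω ≤ s} - P.real {ω | Y ω ≤ s} = P.real {ω | s ∈ Ico (X ω) (Y ω)} := by
  have hinter : ({ω | X ω ≤ s} ∩ {ω | Y ω ≤ s} : Set Ω) =ᵐ[P] {ω | Y ω ≤ s} := by
    filter_upwards [hXY] with ω hω
    exact propext (and_iff_right_of_imp hω.trans)
  have hdiff : {ω | X ω ≤ s} \ {ω | Y ω ≤ s} = {ω | s ∈ Ico (X ω) (Y ω)} := by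
    ext ω
    simp
  rw [← measureReal_inter_add_sdiff₀ (s := {ω | X ω ≤ s})
    (nullMeasurableSet_le hY aemeasurable_const), measureReal_congr hinter, hdiff,
    add_sub_cancel_left]

end MeasureMemIco

section IntervalLength

lemma volume_restrict_Ioc_Ico (a b x y : ℝ) :
    volume.restrict (Ioc a b) (Ico x y) = ENNReal.ofReal (min y b - max x a) := by
  rw [← restrict_Ico_eq_restrict_Ioc, Measure.restrict_apply measurableSet_Ico, Ico_inter_Ico,
    Real.volume_Ico]

lemma volume_restrict_Ioi_Ico (a x y : ℝ) :
    volume.restrict (Ioi a) (Ico x y) = ENNReal.ofReal (y - max x a) := by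
  rw [restrict_Ioi_eq_restrict_Ici, Measure.restrict_apply measurableSet_Ico, Ico_inter_Ici,
    Real.volume_Ico]

lemma volume_restrict_Ioc_Ico_add_le {a x x' y : ℝ} (hx : x ≤ x') (ha : a ≤ x + y) (b y' : ℝ) :
    volume.restrict (Ioc a b) (Ico (x' + y) (x' + y')) ≤
      volume.restrict (Ioc a b) (Ico (x + y) (x + y')) := by
  have ha' : a ≤ x' + y := ha.trans (by gcongr)
  have htruncate : min (x' + y') b ≤ min (x + y') b + (x' - x) := by grind
  rw [volume_restrict_Ioc_Ico, volume_restrict_Ioc_Ico, max_eq_left ha, max_eq_left ha']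
  exact ENNReal.ofReal_le_ofReal (by linarith)

lemma lintegral_volume_restrict_Ioi_Ico_add {Ω : Type*} [MeasurableSpace Ω] {P : Measure Ω}
    {A B : Ω → ℝ} {a : ℝ} (ha : ∀ᵐ ω ∂P, a ≤ A ω + B ω) (B' : Ω → ℝ) :
    ∫⁻ ω, volume.restrict (Ioi a) (Ico (A ω + B ω) (A ω + B' ω)) ∂P =
      ∫⁻ ω, ENNReal.ofReal (B' ω - B ω) ∂P := by
  refine lintegral_congr_ae ?_
  filter_upwards [ha] with ω haω
  rw [volume_restrict_Ioi_Ico, max_eq_left haω, add_sub_add_left_eq_sub]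

end IntervalLength

section SerialInteractionContrast

variable {Ω : Type*} [MeasurableSpace Ω] {P : Measure Ω} [IsFiniteMeasure P]
  {A₁ A₂ B₁ B₂ : Ω → ℝ}

lemma serialInteractionContrast_eq_sub (hA₁ : AEMeasurable A₁ P) (hA₂ : AEMeasurable A₂ P)
    (hB₂ : AEMeasurable B₂ P) (hB : B₁ ≤ᵐ[P] B₂) :
    serialInteractionContrast P A₁ A₂ B₁ B₂ = fun s ↦
      P.real {ω | s ∈ Ico (A₁ ω + B₁ ω) (A₁ ω + B₂ ω)} -
        P.real {ω | s ∈ Ico (A₂ ω + B₁ ω) (A₂ ω + B₂ ω)} := by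
  have hle (A : Ω → ℝ) : (fun ω ↦ A ω + B₁ ω) ≤ᵐ[P] fun ω ↦ A ω + B₂ ω :=
    hB.mono fun ω hω ↦ add_le_add_right hω (A ω)
  funext s
  have hdiff₁ := measureReal_le_sub_measureReal_le (hA₁.add hB₂) (hle A₁) s
  have hdiff₂ := measureReal_le_sub_measureReal_le (hA₂.add hB₂) (hle A₂) s
  simp only [Measure.real, Pi.add_apply] at hdiff₁ hdiff₂ ⊢
  rw [← hdiff₁, ← hdiff₂, serialInteractionContrast]
  ring

variable {ν : Measure ℝ} [SFinite ν]

lemma integrable_serialInteractionContrast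
    (hA₁ : AEMeasurable A₁ P) (hA₂ : AEMeasurable A₂ P)
    (hB₁ : AEMeasurable B₁ P) (hB₂ : AEMeasurable B₂ P) (hB : B₁ ≤ᵐ[P] B₂)
    (hfin₁ : ∫⁻ ω, ν (Ico (A₁ ω + B₁ ω) (A₁ ω + B₂ ω)) ∂P ≠ ∞)
    (hfin₂ : ∫⁻ ω, ν (Ico (A₂ ω + B₁ ω) (A₂ ω + B₂ ω)) ∂P ≠ ∞) :
    Integrable (serialInteractionContrast P A₁ A₂ B₁ B₂) ν := by
  rw [serialInteractionContrast_eq_sub hA₁ hA₂ hB₂ hB]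
  exact (integrable_measureReal_mem_Ico (hA₁.add hB₁) (hA₁.add hB₂) hfin₁).sub
    (integrable_measureReal_mem_Ico (hA₂.add hB₁) (hA₂.add hB₂) hfin₂)

lemma integral_serialInteractionContrast
    (hA₁ : AEMeasurable A₁ P) (hA₂ : AEMeasurable A₂ P)
    (hB₁ : AEMeasurable B₁ P) (hB₂ : AEMeasurable B₂ P) (hB : B₁ ≤ᵐ[P] B₂)
    (hfin₁ : ∫⁻ ω, ν (Ico (A₁ ω + B₁ ω) (A₁ ω + B₂ ω)) ∂P ≠ ∞)
    (hfin₂ : ∫⁻ ω, ν (Ico (A₂ ω + B₁ ω) (A₂ ω + B₂ ω)) ∂P ≠ ∞) :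
    ∫ s, serialInteractionContrast P A₁ A₂ B₁ B₂ s ∂ν =
      (∫⁻ ω, ν (Ico (A₁ ω + B₁ ω) (A₁ ω + B₂ ω)) ∂P).toReal -
        (∫⁻ ω, ν (Ico (A₂ ω + B₁ ω) (A₂ ω + B₂ ω)) ∂P).toReal := by
  have hBint₁ := integrable_measureReal_mem_Ico (hA₁.add hB₁) (hA₁.add hB₂) hfin₁
  have hBint₂ := integrable_measureReal_mem_Ico (hA₂.add hB₁) (hA₂.add hB₂) hfin₂
  rw [serialInteractionContrast_eq_sub hA₁ hA₂ hB₂ hB]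
  refine (integral_sub hBint₁ hBint₂).trans ?_
  congr 1
  exacts [integral_measureReal_mem_Ico (hA₁.add hB₁) (hA₁.add hB₂),
    integral_measureReal_mem_Ico (hA₂.add hB₁) (hA₂.add hB₂)]

lemma setIntegral_Ioc_serialInteractionContrast_nonneg {a : ℝ}
    (hA₁ : AEMeasurable A₁ P) (hA₂ : AEMeasurable A₂ P)
    (hB₁ : AEMeasurable B₁ P) (hB₂ : AEMeasurable B₂ P)
    (hA : A₁ ≤ᵐ[P] A₂) (hB : B₁ ≤ᵐ[P] B₂) (ha : ∀ᵐ ω ∂P, a ≤ A₁ ω + B₁ ω) (b : ℝ) :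
    0 ≤ ∫ s in Ioc a b, serialInteractionContrast P A₁ A₂ B₁ B₂ s := by
  rw [integral_serialInteractionContrast hA₁ hA₂ hB₁ hB₂ hB lintegral_measure_Ico_ne_top
    lintegral_measure_Ico_ne_top, sub_nonneg]
  refine ENNReal.toReal_mono lintegral_measure_Ico_ne_top (lintegral_mono_ae ?_)
  filter_upwards [hA, ha] with ω hAω haω
  exact volume_restrict_Ioc_Ico_add_le hAω haω b (B₂ ω)

lemma integrableOn_Ioi_serialInteractionContrast {a : ℝ}
    (hA₁ : AEMeasurable A₁ P) (hA₂ : AEMeasurable A₂ P)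
    (hB₁ : AEMeasurable B₁ P) (hB₂ : AEMeasurable B₂ P) (hB : B₁ ≤ᵐ[P] B₂)
    (ha₁ : ∀ᵐ ω ∂P, a ≤ A₁ ω + B₁ ω) (ha₂ : ∀ᵐ ω ∂P, a ≤ A₂ ω + B₁ ω)
    (hBint : Integrable (B₂ - B₁) P) :
    IntegrableOn (serialInteractionContrast P A₁ A₂ B₁ B₂) (Ioi a) := by
  apply integrable_serialInteractionContrast hA₁ hA₂ hB₁ hB₂ hB
  · exact lintegral_volume_restrict_Ioi_Ico_add ha₁ B₂ ▸ hBint.lintegral_lt_top.ne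
  · exact lintegral_volume_restrict_Ioi_Ico_add ha₂ B₂ ▸ hBint.lintegral_lt_top.ne

lemma setIntegral_Ioi_serialInteractionContrast {a : ℝ}
    (hA₁ : AEMeasurable A₁ P) (hA₂ : AEMeasurable A₂ P)
    (hB₁ : AEMeasurable B₁ P) (hB₂ : AEMeasurable B₂ P) (hB : B₁ ≤ᵐ[P] B₂)
    (ha₁ : ∀ᵐ ω ∂P, a ≤ A₁ ω + B₁ ω) (ha₂ : ∀ᵐ ω ∂P, a ≤ A₂ ω + B₁ ω)
    (hBint : Integrable (B₂ - B₁) P) :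
    ∫ s in Ioi a, serialInteractionContrast P A₁ A₂ B₁ B₂ s = 0 := by
  have hlength₁ := lintegral_volume_restrict_Ioi_Ico_add ha₁ B₂
  have hlength₂ := lintegral_volume_restrict_Ioi_Ico_add ha₂ B₂
  rw [integral_serialInteractionContrast hA₁ hA₂ hB₁ hB₂ hB
    (hlength₁ ▸ hBint.lintegral_lt_top.ne) (hlength₂ ▸ hBint.lintegral_lt_top.ne),
    hlength₁, hlength₂, sub_self]

theorem interaction_contrast_serial_general
    (hA₁ : AEMeasurable A₁ P) (hA₂ : AEMeasurable A₂ P)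
    (hB₁ : AEMeasurable B₁ P) (hB₂ : AEMeasurable B₂ P)
    (hA : A₁ ≤ᵐ[P] A₂) (hB : B₁ ≤ᵐ[P] B₂) (h0 : ∀ᵐ ω ∂P, 0 ≤ A₁ ω + B₁ ω) :
    (∀ t : ℝ, 0 ≤ t →
      0 ≤ ∫ s in (0 : ℝ)..t, serialInteractionContrast P A₁ A₂ B₁ B₂ s) ∧
    (Integrable (B₂ - B₁) P →
      IntegrableOn (serialInteractionContrast P A₁ A₂ B₁ B₂) (Ioi 0) ∧
      ∫ s in Ioi (0 : ℝ), serialInteractionContrast P A₁ A₂ B₁ B₂ s = 0) := by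
  have h0' : ∀ᵐ ω ∂P, 0 ≤ A₂ ω + B₁ ω := by
    filter_upwards [h0, hA] with ω hω hAω using hω.trans (add_le_add_left hAω (B₁ ω))
  refine ⟨fun t ht ↦ ?_, fun hBint ↦ ⟨?_, ?_⟩⟩
  · rw [intervalIntegral.integral_of_le ht]
    exact setIntegral_Ioc_serialInteractionContrast_nonneg hA₁ hA₂ hB₁ hB₂ hA hB h0 t
  · exact integrableOn_Ioi_serialInteractionContrast hA₁ hA₂ hB₁ hB₂ hB h0 h0' hBint
  · exact setIntegral_Ioi_serialInteractionContrast hA₁ hA₂ hB₁ hB₂ hB h0 h0' hBint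

end SerialInteractionContrast

/-- Interaction contrast for the serial architecture. If the
nonnegative integrable process durations `A₁, A₂, B₁, B₂` on a common probability space
satisfy the prolongation constraints `A₁ ≤ A₂` and `B₁ ≤ B₂` pointwise, and the response
times are `T_{ij} = A_i + B_j`, then the interaction contrast `c` satisfies
(i) `∫₀ᵗ c(s) ds ≥ 0` for every `t ≥ 0`, and (ii) `∫₀^∞ c(s) ds = 0`. -/
theorem interaction_contrast_serial
    {Ω : Type u} [MeasurableSpace Ω] (P : Measure Ω) [IsProbabilityMeasure P]
    (A₁ A₂ B₁ B₂ : Ω → ℝ)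
    (hA₁ : Measurable A₁) (hA₂ : Measurable A₂)
    (hB₁ : Measurable B₁) (hB₂ : Measurable B₂)
    (hA₁0 : ∀ ω, 0 ≤ A₁ ω) (hA₂0 : ∀ ω, 0 ≤ A₂ ω)
    (hB₁0 : ∀ ω, 0 ≤ B₁ ω) (hB₂0 : ∀ ω, 0 ≤ B₂ ω)
    (hA₁int : Integrable A₁ P) (hA₂int : Integrable A₂ P)
    (hB₁int : Integrable B₁ P) (hB₂int : Integrable B₂ P)
    (hA : ∀ ω, A₁ ω ≤ A₂ ω) (hB : ∀ ω, B₁ ω ≤ B₂ ω) :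
    (∀ t : ℝ, 0 ≤ t →
      0 ≤ ∫ s in (0 : ℝ)..t, serialInteractionContrast P A₁ A₂ B₁ B₂ s) ∧
    (∫ s in Set.Ioi (0 : ℝ), serialInteractionContrast P A₁ A₂ B₁ B₂ s) = 0 := by
  have hgeneral := interaction_contrast_serial_general hA₁.aemeasurable hA₂.aemeasurable
    hB₁.aemeasurable hB₂.aemeasurable (ae_of_all P hA) (ae_of_all P hB)
    (ae_of_all P fun ω ↦ add_nonneg (hA₁0 ω) (hB₁0 ω))
  exact ⟨hgeneral.1, (hgeneral.2 (hB₂int.sub hB₁int)).2⟩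
end
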